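/- arXiv:2601.20493 — 2 statements merged into one kernel-verified Lean document; each statement's English description precedes it below -/
import Mathlib

section
/- Let n ≥ 2 and f ∈ C^∞(B₁). Let u : B₁ → ℝ be continuous and nonnegative, and assume u is C² on the open set {u > 0} with Δu = −f there. Assume moreover that for every open set D compactly contained in B₁ there is a constant C_D < ∞ such that (1/r) ⨍_{∂B_r(x)} u dμH^{n−1} ≤ C_D for every ball B_r(x) ⊆ D with x ∈ ∂{u > 0}. Then u is locally Lipschitz in B₁: for every δ ∈ (0,1) there is a constant C_δ such that u restricted to B_{1−δ} is Lipschitz with constant C_δ. -/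
open MeasureTheory Metric Set Filter
open scoped ENNReal RealInnerProductSpace Topology NNReal

noncomputable section

variable {n : ℕ}

/-- The Laplacian of `u : ℝⁿ → ℝ`, written with iterated directional derivatives. -/
def lap (u : EuclideanSpace ℝ (Fin n) → ℝ) (x : EuclideanSpace ℝ (Fin n)) : ℝ :=
  ∑ i : Fin n, fderiv ℝ (fun y => fderiv ℝ u y (EuclideanSpace.single i 1)) x
    (EuclideanSpace.single i 1)

/-- The positivity set `{u > 0}` of `u`, within the open unit ball `B₁`. -/
def posSet (u : EuclideanSpace ℝ (Fin n) → ℝ) : Set (EuclideanSpace ℝ (Fin n)) :=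
  {x | x ∈ ball (0 : EuclideanSpace ℝ (Fin n)) 1 ∧ 0 < u x}

/-- `U` coincides, inside some small ball around `z`, with the open region above the graph of an
`L`-Lipschitz function `φ` (vanishing at the origin) in some rotated coordinate frame. -/
def IsLipGraphNear (U : Set (EuclideanSpace ℝ (Fin n))) (z : EuclideanSpace ℝ (Fin n)) : Prop :=
  ∃ (r L : ℝ)
    (e : WithLp 2 (EuclideanSpace ℝ (Fin (n-1)) × ℝ) ≃ₗᵢ[ℝ] EuclideanSpace ℝ (Fin n))
    (φ : EuclideanSpace ℝ (Fin (n-1)) → ℝ),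
    0 < r ∧ 0 < L ∧ LipschitzWith (Real.toNNReal L) φ ∧ φ 0 = 0 ∧
    U ∩ ball z r =
      {p | ∃ y t, φ y < t ∧
        p = z + e ((WithLp.equiv 2 (EuclideanSpace ℝ (Fin (n-1)) × ℝ)).symm (y, t))} ∩ ball z r

/-- A bounded Lipschitz domain of `ℝⁿ`. -/
def IsLipschitzDomain (Ω : Set (EuclideanSpace ℝ (Fin n))) : Prop :=
  Bornology.IsBounded Ω ∧ IsOpen Ω ∧ IsConnected Ω ∧ ∀ x ∈ frontier Ω, IsLipGraphNear Ω x

/-- Near `z`, the set `S` is the graph of a `C^∞` function `ψ` (vanishing at the origin) in some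
rotated coordinate frame: `S` is a smooth hypersurface near `z`. -/
def IsSmoothGraphNear (S : Set (EuclideanSpace ℝ (Fin n))) (z : EuclideanSpace ℝ (Fin n)) : Prop :=
  ∃ (ρ : ℝ)
    (e : WithLp 2 (EuclideanSpace ℝ (Fin (n-1)) × ℝ) ≃ₗᵢ[ℝ] EuclideanSpace ℝ (Fin n))
    (ψ : EuclideanSpace ℝ (Fin (n-1)) → ℝ),
    0 < ρ ∧ ContDiff ℝ (⊤ : ℕ∞) ψ ∧ ψ 0 = 0 ∧
    S ∩ ball z ρ =
      {p | ∃ y t, t = ψ y ∧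
        p = z + e ((WithLp.equiv 2 (EuclideanSpace ℝ (Fin (n-1)) × ℝ)).symm (y, t))} ∩ ball z ρ

/-- `g` is the weak gradient of `u` on the set `s`. -/
def HasWeakGradOn (u : EuclideanSpace ℝ (Fin n) → ℝ)
    (g : EuclideanSpace ℝ (Fin n) → EuclideanSpace ℝ (Fin n))
    (s : Set (EuclideanSpace ℝ (Fin n))) : Prop :=
  ∀ η : EuclideanSpace ℝ (Fin n) → ℝ, ContDiff ℝ (⊤ : ℕ∞) η → HasCompactSupport η → tsupport η ⊆ s →
    ∀ v : EuclideanSpace ℝ (Fin n),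
      ∫ x in s, u x * fderiv ℝ η x v = -∫ x in s, ⟪g x, v⟫ * η x

/-- `u` is a weak solution of the Alt–Caffarelli type problem
`Δu = -f` in `{u>0} ∩ B₁`, `∂_ν u = Q` on `∂{u>0} ∩ B₁` (Definition 2.1). -/
structure IsWeakSolution (f Q u : EuclideanSpace ℝ (Fin n) → ℝ) : Prop where
  contOn : ContinuousOn u (ball 0 1)
  nonneg : ∀ x ∈ ball (0 : EuclideanSpace ℝ (Fin n)) 1, 0 ≤ u x
  c2 : ContDiffOn ℝ 2 u (posSet u)
  eqn : ∀ x ∈ posSet u, lap u x = - f x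
  nondeg : ∀ D : Set (EuclideanSpace ℝ (Fin n)), IsOpen D →
    closure D ⊆ ball (0 : EuclideanSpace ℝ (Fin n)) 1 →
    ∃ c C : ℝ, 0 < c ∧ c ≤ C ∧ ∀ x r, 0 < r → ball x r ⊆ D → x ∈ frontier (posSet u) →
      c ≤ (1/r) * ⨍ y in sphere x r, u y ∂(μH[(n-1:ℝ)]) ∧
      (1/r) * ⨍ y in sphere x r, u y ∂(μH[(n-1:ℝ)]) ≤ C
  locLip : ∀ K : Set (EuclideanSpace ℝ (Fin n)), IsCompact K →
    K ⊆ ball (0 : EuclideanSpace ℝ (Fin n)) 1 → ∃ L : ℝ≥0, LipschitzOnWith L u K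
  weakEq : ∀ η : EuclideanSpace ℝ (Fin n) → ℝ, ContDiff ℝ (⊤ : ℕ∞) η → HasCompactSupport η →
    tsupport η ⊆ ball (0 : EuclideanSpace ℝ (Fin n)) 1 →
    -∫ x in ball (0 : EuclideanSpace ℝ (Fin n)) 1, ⟪gradient u x, gradient η x⟫
      = ∫ x in frontier (posSet u) ∩ ball (0 : EuclideanSpace ℝ (Fin n)) 1,
          Q x * η x ∂(μH[(n-1:ℝ)])
        - ∫ x in posSet u, f x * η x

/-! ### The radial kernel -/

/-- The kernel potential `(1 - |y|²)₊²`. -/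
def kerP (y : EuclideanSpace ℝ (Fin n)) : ℝ := (max 0 (1 - ‖y‖ ^ 2)) ^ 2

/-- The averaging kernel `4 (1 - |y|²)₊`. -/
def kerR (y : EuclideanSpace ℝ (Fin n)) : ℝ := 4 * max 0 (1 - ‖y‖ ^ 2)

lemma hasDerivAt_sq_max (t : ℝ) : HasDerivAt (fun t : ℝ => (max 0 t) ^ 2) (2 * max 0 t) t := by
  rcases lt_trichotomy t 0 with h | h | h
  · have : (fun t : ℝ => (max 0 t) ^ 2) =ᶠ[𝓝 t] fun _ => 0 := by
      filter_upwards [eventually_lt_nhds h] with s hs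
      simp [max_eq_left hs.le]
    rw [max_eq_left h.le, mul_zero]
    exact (hasDerivAt_const t (0 : ℝ)).congr_of_eventuallyEq this
  · subst h
    rw [hasDerivAt_iff_isLittleO]
    simp only [max_self, mul_zero, sub_zero, smul_zero]
    have h1 : (fun x : ℝ => (max 0 x) ^ 2 - (0 : ℝ) ^ 2) =O[𝓝 0] fun x : ℝ => x ^ 2 := by
      refine Asymptotics.IsBigO.of_bound 1 (Eventually.of_forall fun x => ?_)
      rcases le_total 0 x with hx | hx
      · simp [max_eq_right hx]
      · simp [max_eq_left hx]
        positivity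
    exact h1.trans_isLittleO (Asymptotics.isLittleO_pow_id one_lt_two)
  · have : (fun t : ℝ => (max 0 t) ^ 2) =ᶠ[𝓝 t] fun t => t ^ 2 := by
      filter_upwards [eventually_gt_nhds h] with s hs
      simp [max_eq_right hs.le]
    rw [max_eq_right h.le]
    simpa using (hasDerivAt_pow 2 t).congr_of_eventuallyEq this

lemma hasFDerivAt_kerP (y : EuclideanSpace ℝ (Fin n)) :
    HasFDerivAt kerP (-(kerR y) • innerSL ℝ y) y := by
  have h1 : HasFDerivAt (fun y : EuclideanSpace ℝ (Fin n) => 1 - ‖y‖ ^ 2)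
      (-(2 • innerSL ℝ y)) y := by
    have := (hasStrictFDerivAt_norm_sq y).hasFDerivAt.const_sub 1
    exact this
  have h2 := (hasDerivAt_sq_max (1 - ‖y‖ ^ 2)).comp_hasFDerivAt y h1
  refine h2.congr_fderiv ?_
  ext w
  simp [kerR]
  ring

lemma kerR_nonneg (y : EuclideanSpace ℝ (Fin n)) : 0 ≤ kerR y := by
  unfold kerR; positivity

lemma kerP_nonneg (y : EuclideanSpace ℝ (Fin n)) : 0 ≤ kerP y := by
  unfold kerP; positivity

lemma continuous_kerR : Continuous (kerR : EuclideanSpace ℝ (Fin n) → ℝ) := by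
  unfold kerR; fun_prop

lemma continuous_kerP : Continuous (kerP : EuclideanSpace ℝ (Fin n) → ℝ) := by
  unfold kerP; fun_prop

lemma max_eq_zero_of {y : EuclideanSpace ℝ (Fin n)} (hy : 1 ≤ ‖y‖) :
    max 0 (1 - ‖y‖ ^ 2) = 0 := by
  apply max_eq_left; nlinarith

lemma kerR_eq_zero {y : EuclideanSpace ℝ (Fin n)} (hy : 1 ≤ ‖y‖) : kerR y = 0 := by
  simp [kerR, max_eq_zero_of hy]

lemma kerP_eq_zero {y : EuclideanSpace ℝ (Fin n)} (hy : 1 ≤ ‖y‖) : kerP y = 0 := by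
  simp [kerP, max_eq_zero_of hy]

lemma hcs_kerR : HasCompactSupport (kerR : EuclideanSpace ℝ (Fin n) → ℝ) := by
  refine HasCompactSupport.intro (isCompact_closedBall 0 1) fun x hx => kerR_eq_zero ?_
  simp at hx; exact hx.le

lemma hcs_kerP : HasCompactSupport (kerP : EuclideanSpace ℝ (Fin n) → ℝ) := by
  refine HasCompactSupport.intro (isCompact_closedBall 0 1) fun x hx => kerP_eq_zero ?_
  simp at hx; exact hx.le

lemma kerR_lip (y z : EuclideanSpace ℝ (Fin n)) : |kerR y - kerR z| ≤ 8 * ‖y - z‖ := by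
  have key : ∀ a b : ℝ, 0 ≤ a → 0 ≤ b →
      4 * max 0 (1 - a ^ 2) - 4 * max 0 (1 - b ^ 2) ≤ 8 * |a - b| := by
    intro a b ha hb
    have h1 := le_abs_self (a - b)
    have h2 := neg_abs_le (a - b)
    rcases le_total 1 a with h | h
    · rw [max_eq_left (by nlinarith : 1 - a ^ 2 ≤ 0)]
      have : 0 ≤ max 0 (1 - b ^ 2) := le_max_left _ _
      have := abs_nonneg (a - b)
      linarith
    · rw [max_eq_right (by nlinarith : 0 ≤ 1 - a ^ 2)]
      rcases le_total 1 b with h' | h'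
      · rw [max_eq_left (by nlinarith : 1 - b ^ 2 ≤ 0)]
        nlinarith
      · rw [max_eq_right (by nlinarith : 0 ≤ 1 - b ^ 2)]
        nlinarith [mul_nonneg (sub_nonneg.2 h) (abs_nonneg (a-b)),
          mul_nonneg (sub_nonneg.2 h') (abs_nonneg (a-b)), mul_nonneg ha (abs_nonneg (a-b)),
          mul_nonneg ha (by linarith : 0 ≤ |a-b| + (a-b)), mul_nonneg hb (by linarith : 0 ≤ |a-b| + (a-b))]
  have h3 := abs_norm_sub_norm_le y z
  have h4 := key ‖y‖ ‖z‖ (norm_nonneg _) (norm_nonneg _)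
  have h5 := key ‖z‖ ‖y‖ (norm_nonneg _) (norm_nonneg _)
  rw [abs_sub_comm] at h5
  unfold kerR
  rw [abs_le]; constructor <;> linarith

lemma integral_kerR_pos : 0 < ∫ y : EuclideanSpace ℝ (Fin n), kerR y := by
  refine continuous_kerR.integral_pos_of_hasCompactSupport_nonneg_nonzero hcs_kerR
    (fun y => kerR_nonneg y) (x := 0) ?_
  simp [kerR]

/-! ### The mean value derivative formula -/

set_option maxHeartbeats 1000000 in
lemma hasDerivAt_mean (v : EuclideanSpace ℝ (Fin n) → ℝ) (hv : ContDiff ℝ 2 v)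
    (x : EuclideanSpace ℝ (Fin n)) (r₀ : ℝ) :
    HasDerivAt (fun r : ℝ => ∫ y, kerR y * v (x + r • y))
      (r₀ * ∫ y, kerP y * lap v (x + r₀ • y)) r₀ := by
  have hvc : Continuous v := hv.continuous
  have hdv : Continuous (fderiv ℝ v) := hv.continuous_fderiv (by norm_num)
  have hdiff : Differentiable ℝ v := hv.differentiable (by norm_num)
  have hg : ∀ i : Fin n, ContDiff ℝ 1 (fun z => fderiv ℝ v z (EuclideanSpace.single i 1)) := by
    intro i
    have : ContDiff ℝ 1 (fderiv ℝ v) := hv.fderiv_right (by norm_num)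
    exact this.clm_apply contDiff_const
  have step1 : HasDerivAt (fun r : ℝ => ∫ y, kerR y * v (x + r • y))
      (∫ y, kerR y * fderiv ℝ v (x + r₀ • y) y) r₀ := by
    have hcomp : IsCompact (closedBall r₀ 1 ×ˢ closedBall (0 : EuclideanSpace ℝ (Fin n)) 1) :=
      (isCompact_closedBall _ _).prod (isCompact_closedBall _ _)
    have hcont : Continuous fun p : ℝ × EuclideanSpace ℝ (Fin n) =>
        kerR p.2 * fderiv ℝ v (x + p.1 • p.2) p.2 := by
      have := (continuous_kerR (n := n))
      have h2 : Continuous fun p : ℝ × EuclideanSpace ℝ (Fin n) => fderiv ℝ v (x + p.1 • p.2) :=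
        hdv.comp (by fun_prop)
      fun_prop
    obtain ⟨M, hM⟩ := hcomp.exists_bound_of_continuousOn hcont.continuousOn
    refine (hasDerivAt_integral_of_dominated_loc_of_deriv_le
      (F := fun (r : ℝ) y => kerR y * v (x + r • y))
      (F' := fun (r : ℝ) y => kerR y * fderiv ℝ v (x + r • y) y)
      (bound := indicator (closedBall 0 1) fun _ => M)
      (closedBall_mem_nhds r₀ one_pos) ?_ ?_ ?_ ?_ ?_ ?_).2
    · refine Eventually.of_forall fun r => Continuous.aestronglyMeasurable ?_
      have := (continuous_kerR (n := n))
      fun_prop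
    · refine Continuous.integrable_of_hasCompactSupport ?_ hcs_kerR.mul_right
      have := (continuous_kerR (n := n))
      fun_prop
    · refine Continuous.aestronglyMeasurable ?_
      have h2 : Continuous fun y : EuclideanSpace ℝ (Fin n) => fderiv ℝ v (x + r₀ • y) :=
        hdv.comp (by fun_prop)
      exact continuous_kerR.mul (h2.clm_apply continuous_id)
    · refine Eventually.of_forall fun y r hr => ?_
      by_cases hy : y ∈ closedBall (0 : EuclideanSpace ℝ (Fin n)) 1
      · rw [indicator_of_mem hy]
        exact hM (r, y) ⟨hr, hy⟩
      · rw [indicator_of_notMem hy, kerR_eq_zero]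
        · simp
        · simp at hy; exact hy.le
    · rw [integrable_indicator_iff measurableSet_closedBall]
      exact integrableOn_const (measure_closedBall_lt_top.ne)
    · refine Eventually.of_forall fun y r hr => ?_
      have h1 : HasDerivAt (fun r : ℝ => x + r • y) y r := by
        simpa using ((hasDerivAt_id r).smul_const y).const_add x
      exact ((hdiff (x + r • y)).hasFDerivAt.comp_hasDerivAt r h1).const_mul (kerR y)
  refine step1.congr_deriv ?_
  -- integration by parts
  set e : Fin n → EuclideanSpace ℝ (Fin n) := fun i => EuclideanSpace.single i 1 with he
  set g : Fin n → EuclideanSpace ℝ (Fin n) → ℝ := fun i y => fderiv ℝ v (x + r₀ • y) (e i) with hgdef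
  have hgC : ∀ i, ContDiff ℝ 1 (g i) := fun i => (hg i).comp (by fun_prop)
  have hgd : ∀ i y, fderiv ℝ (g i) y (e i)
      = r₀ * fderiv ℝ (fun z => fderiv ℝ v z (e i)) (x + r₀ • y) (e i) := by
    intro i y
    have h1 : HasFDerivAt (fun y : EuclideanSpace ℝ (Fin n) => x + r₀ • y)
        (r₀ • ContinuousLinearMap.id ℝ _) y := ((hasFDerivAt_id y).const_smul r₀).const_add x
    have h2 := (((hg i).differentiable (by norm_num)) (x + r₀ • y)).hasFDerivAt.comp y h1
    have h3 : fderiv ℝ (g i) y = _ := h2.fderiv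
    rw [h3]; simp [he]
  have hPd : ∀ i y, fderiv ℝ kerP y (e i) = - (kerR y * y i) := by
    intro i y
    rw [(hasFDerivAt_kerP y).fderiv]
    simp [he, EuclideanSpace.inner_single_right]
  have hPdiff : Differentiable ℝ (kerP : EuclideanSpace ℝ (Fin n) → ℝ) :=
    fun y => (hasFDerivAt_kerP y).differentiableAt
  have hI1 : ∀ i, Integrable (fun y => kerP y * fderiv ℝ (g i) y (e i)) := by
    intro i
    refine Continuous.integrable_of_hasCompactSupport ?_ hcs_kerP.mul_right
    exact continuous_kerP.mul (((hgC i).continuous_fderiv (by norm_num)).clm_apply continuous_const)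
  have hI2 : ∀ i, Integrable (fun y : EuclideanSpace ℝ (Fin n) => kerR y * y i * g i y) := by
    intro i
    refine Continuous.integrable_of_hasCompactSupport ?_ (hcs_kerR.mul_right.mul_right)
    have := (hgC i).continuous
    have := (continuous_kerR (n := n))
    fun_prop
  have ibp : ∀ i, ∫ y, kerP y * fderiv ℝ (g i) y (e i) = ∫ y, kerR y * y i * g i y := by
    intro i
    rw [integral_mul_fderiv_eq_neg_fderiv_mul_of_integrable]
    · simp only [hPd, neg_mul, integral_neg, neg_neg]
    · simp only [hPd, neg_mul]
      exact (hI2 i).neg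
    · exact hI1 i
    · exact Continuous.integrable_of_hasCompactSupport (continuous_kerP.mul (hgC i).continuous)
        hcs_kerP.mul_right
    · exact fun y _ => hPdiff y
    · exact fun y _ => (hgC i).differentiable (by norm_num) y
  calc ∫ y, kerR y * fderiv ℝ v (x + r₀ • y) y
      = ∫ y, ∑ i, kerR y * y i * g i y := by
        congr 1; ext y
        have : y = ∑ i, y i • e i := by
          have h := (EuclideanSpace.basisFun (Fin n) ℝ).sum_repr y
          simpa [he] using h.symm
        have hL : ∀ T : EuclideanSpace ℝ (Fin n) →L[ℝ] ℝ, T y = ∑ i, y i * T (e i) := by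
          intro T
          conv_lhs => rw [this]
          simp [map_sum]
        rw [hL, Finset.mul_sum]
        refine Finset.sum_congr rfl fun i _ => ?_
        rw [hgdef]; ring
    _ = ∑ i, ∫ y, kerR y * y i * g i y := integral_finsetSum _ fun i _ => hI2 i
    _ = ∑ i, ∫ y, kerP y * fderiv ℝ (g i) y (e i) := by simp only [ibp]
    _ = ∫ y, ∑ i, kerP y * fderiv ℝ (g i) y (e i) := (integral_finsetSum _ fun i _ => hI1 i).symm
    _ = ∫ y, r₀ * (kerP y * lap v (x + r₀ • y)) := by
        congr 1; ext y
        simp only [hgd, lap, Finset.mul_sum]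
        refine Finset.sum_congr rfl fun i _ => ?_
        simp only [he]; ring
    _ = _ := integral_const_mul _ _

/-! ### The local estimate -/

lemma continuous_lap (v : EuclideanSpace ℝ (Fin n) → ℝ) (hv : ContDiff ℝ 2 v) :
    Continuous (lap v) := by
  have h0 : ContDiff ℝ 1 (fderiv ℝ v) := hv.fderiv_right (by norm_num)
  unfold lap
  refine continuous_finsetSum _ fun i _ => ?_
  have h1 : ContDiff ℝ 1 (fun z => fderiv ℝ v z (EuclideanSpace.single i 1)) :=
    h0.clm_apply contDiff_const
  exact (h1.continuous_fderiv (by norm_num)).clm_apply continuous_const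

lemma lap_congr {u v : EuclideanSpace ℝ (Fin n) → ℝ} {x : EuclideanSpace ℝ (Fin n)}
    (h : u =ᶠ[𝓝 x] v) : lap u x = lap v x := by
  unfold lap
  refine Finset.sum_congr rfl fun i _ => ?_
  have : (fun y => fderiv ℝ u y (EuclideanSpace.single i 1))
      =ᶠ[𝓝 x] fun y => fderiv ℝ v y (EuclideanSpace.single i 1) := by
    filter_upwards [h.fderiv (𝕜 := ℝ)] with y hy
    rw [hy]
  rw [this.fderiv_eq]

lemma exists_cutoff (u : EuclideanSpace ℝ (Fin n) → ℝ) (x : EuclideanSpace ℝ (Fin n)) (R : ℝ)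
    (hR : 0 < R) (hu : ContDiffOn ℝ 2 u (ball x (2 * R))) :
    ∃ v : EuclideanSpace ℝ (Fin n) → ℝ, ContDiff ℝ 2 v ∧ HasCompactSupport v ∧
      ∀ z ∈ ball x (3 / 2 * R), v z = u z := by
  let χ : ContDiffBump x := ⟨3 / 2 * R, 7 / 4 * R, by positivity, by linarith⟩
  refine ⟨fun z => χ z * u z, ?_, χ.hasCompactSupport.mul_right, ?_⟩
  · rw [contDiff_iff_contDiffAt]
    intro z
    by_cases hz : z ∈ ball x (2 * R)
    · exact χ.contDiff.contDiffAt.mul (hu.contDiffAt (isOpen_ball.mem_nhds hz))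
    · have hz' : z ∈ (closedBall x (7 / 4 * R))ᶜ := by
        simp at hz ⊢; linarith
      have : (fun z => χ z * u z) =ᶠ[𝓝 z] fun _ => 0 := by
        filter_upwards [isClosed_closedBall.isOpen_compl.mem_nhds hz'] with y hy
        rw [χ.zero_of_le_dist, zero_mul]
        simp at hy; exact hy.le
      exact contDiffAt_const.congr_of_eventuallyEq this
  · intro z hz
    show χ z * u z = u z
    rw [χ.one_of_mem_closedBall (ball_subset_closedBall hz), one_mul]

lemma mean_change (v : EuclideanSpace ℝ (Fin n) → ℝ) (x : EuclideanSpace ℝ (Fin n)) (R : ℝ)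
    (hR : 0 < R) :
    ∫ y, kerR y * v (x + R • y) = (R ^ n)⁻¹ * ∫ z, kerR (R⁻¹ • (z - x)) * v z := by
  have h := Measure.integral_comp_smul (volume : Measure (EuclideanSpace ℝ (Fin n)))
    (fun w => kerR (R⁻¹ • w) * v (x + w)) R
  simp only [smul_smul, inv_mul_cancel₀ hR.ne', one_smul, finrank_euclideanSpace,
    Fintype.card_fin, smul_eq_mul] at h
  rw [h, abs_of_pos (by positivity)]
  congr 1
  rw [← integral_add_left_eq_self (fun z => kerR (R⁻¹ • (z - x)) * v z) x]
  simp

lemma local_est (f u : EuclideanSpace ℝ (Fin n) → ℝ) (x x' : EuclideanSpace ℝ (Fin n)) (R L : ℝ)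
    (hR : 0 < R) (hu : ContDiffOn ℝ 2 u (ball x (2 * R)))
    (hlap : ∀ z ∈ ball x (2 * R), lap u z = - f z)
    (hfL : ∀ z ∈ ball x (2 * R), ∀ z' ∈ ball x (2 * R), |f z - f z'| ≤ L * ‖z - z'‖)
    (hu0 : ∀ z ∈ ball x (2 * R), 0 ≤ u z) (hx' : dist x' x < R / 4) :
    |u x - u x'| * (∫ y : EuclideanSpace ℝ (Fin n), kerR y) ≤
      (R ^ 2 * L * (∫ y : EuclideanSpace ℝ (Fin n), kerP y)
        + 8 * (R ^ (n + 1))⁻¹ * ∫ z in ball x (3 / 2 * R), u z) * ‖x - x'‖ := by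
  obtain ⟨v, hv, hvs, hvu⟩ := exists_cutoff u x R hR hu
  set IR := ∫ y : EuclideanSpace ℝ (Fin n), kerR y with hIR
  set IP := ∫ y : EuclideanSpace ℝ (Fin n), kerP y with hIP
  have hsub : ball x (3 / 2 * R) ⊆ ball x (2 * R) := ball_subset_ball (by linarith)
  have hvlap : ∀ z ∈ ball x (3 / 2 * R), lap v z = - f z := by
    intro z hz
    rw [← hlap z (hsub hz)]
    refine lap_congr ?_
    filter_upwards [isOpen_ball.mem_nhds hz] with y hy using hvu y hy
  have hlc := continuous_lap v hv
  have hint : ∀ (p : EuclideanSpace ℝ (Fin n)) (r : ℝ),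
      Integrable (fun y => kerP y * lap v (p + r • y)) := by
    intro p r
    refine Continuous.integrable_of_hasCompactSupport ?_ hcs_kerP.mul_right
    have := continuous_kerP (n := n)
    fun_prop
  have hmem : ∀ p : EuclideanSpace ℝ (Fin n), dist p x < R / 4 → ∀ r ∈ Icc 0 R,
      ∀ y : EuclideanSpace ℝ (Fin n), ‖y‖ ≤ 1 → p + r • y ∈ ball x (3 / 2 * R) := by
    intro p hp r hr y hy
    rw [mem_ball]
    have h1 : dist (p + r • y) p ≤ R := by
      rw [dist_eq_norm, add_sub_cancel_left, norm_smul, Real.norm_eq_abs, abs_of_nonneg hr.1]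
      nlinarith [hr.1, hr.2, norm_nonneg y]
    linarith [dist_triangle (p + r • y) p x]
  have hxx : dist x x < R / 4 := by rw [dist_self]; positivity
  set H : ℝ → ℝ := fun r => (∫ y, kerR y * v (x + r • y)) - ∫ y, kerR y * v (x' + r • y) with hH
  have hbound : ∀ r ∈ Icc 0 R,
      ‖(r * ∫ y, kerP y * lap v (x + r • y)) - r * ∫ y, kerP y * lap v (x' + r • y)‖
        ≤ R * (IP * (L * ‖x - x'‖)) := by
    intro r hr
    rw [← mul_sub, norm_mul, Real.norm_eq_abs, abs_of_nonneg hr.1]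
    refine mul_le_mul hr.2 ?_ (norm_nonneg _) hR.le
    rw [← integral_sub (hint x r) (hint x' r), hIP, ← integral_mul_const]
    refine norm_integral_le_of_norm_le ?_ (Eventually.of_forall fun y => ?_)
    · exact (continuous_kerP.integrable_of_hasCompactSupport hcs_kerP).mul_const _
    · rw [← mul_sub, norm_mul, Real.norm_eq_abs, abs_of_nonneg (kerP_nonneg y)]
      rcases le_or_gt 1 ‖y‖ with hy | hy
      · simp [kerP_eq_zero hy]
      · refine mul_le_mul_of_nonneg_left ?_ (kerP_nonneg y)
        have m1 := hmem x hxx r hr y hy.le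
        have m2 := hmem x' hx' r hr y hy.le
        rw [hvlap _ m1, hvlap _ m2, Real.norm_eq_abs]
        have := hfL _ (hsub m2) _ (hsub m1)
        rw [norm_sub_rev x x']
        calc _ = |f (x' + r • y) - f (x + r • y)| := by congr 1; ring
          _ ≤ _ := this
          _ = _ := by congr 2; abel
  have hmvt : ‖H R - H 0‖ ≤ R * (IP * (L * ‖x - x'‖)) * ‖R - 0‖ := by
    refine Convex.norm_image_sub_le_of_norm_hasDerivWithin_le (s := Icc 0 R)
      (f' := fun r => (r * ∫ y, kerP y * lap v (x + r • y)) - r * ∫ y, kerP y * lap v (x' + r • y))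
      (fun r _ => ?_) hbound (convex_Icc _ _) ⟨le_rfl, hR.le⟩ ⟨hR.le, le_rfl⟩
    exact ((hasDerivAt_mean v hv x r).sub (hasDerivAt_mean v hv x' r)).hasDerivWithinAt
  have hx0 : v x = u x := hvu x (mem_ball_self (by positivity))
  have hx0' : v x' = u x' := hvu x' (by rw [mem_ball]; linarith)
  have hH0 : H 0 = (u x - u x') * IR := by
    simp only [hH, zero_smul, add_zero, integral_mul_const, hx0, hx0', hIR]; ring
  have huint : IntegrableOn u (ball x (3 / 2 * R)) := by
    have : IntegrableOn v (ball x (3 / 2 * R)) :=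
      (hv.continuous.integrable_of_hasCompactSupport hvs).integrableOn
    exact this.congr_fun (fun z hz => hvu z hz) measurableSet_ball
  have hI3 : ∀ p : EuclideanSpace ℝ (Fin n), Integrable (fun z => kerR (R⁻¹ • (z - p)) * v z) := by
    intro p
    refine Continuous.integrable_of_hasCompactSupport ?_ hvs.mul_left
    have := continuous_kerR (n := n)
    have := hv.continuous
    fun_prop
  have hHR : ‖H R‖ ≤ (R ^ n)⁻¹ * (8 * R⁻¹ * ‖x - x'‖ * ∫ z in ball x (3 / 2 * R), u z) := by
    simp only [hH]
    rw [mean_change v x R hR, mean_change v x' R hR, ← mul_sub, norm_mul, Real.norm_eq_abs,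
      abs_of_pos (by positivity : 0 < (R ^ n)⁻¹)]
    refine mul_le_mul_of_nonneg_left ?_ (by positivity)
    rw [← integral_sub (hI3 x) (hI3 x'), ← integral_const_mul, ← integral_indicator measurableSet_ball]
    refine norm_integral_le_of_norm_le ?_ (Eventually.of_forall fun z => ?_)
    · rw [integrable_indicator_iff measurableSet_ball]
      exact huint.const_mul _
    · by_cases hz : z ∈ ball x (3 / 2 * R)
      · rw [indicator_of_mem hz, ← sub_mul, norm_mul, hvu z hz, Real.norm_eq_abs, Real.norm_eq_abs,
          abs_of_nonneg (hu0 z (hsub hz))]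
        refine mul_le_mul_of_nonneg_right ?_ (hu0 z (hsub hz))
        refine (kerR_lip _ _).trans ?_
        rw [← smul_sub, norm_smul, norm_inv, Real.norm_eq_abs, abs_of_pos hR, norm_sub_rev x x',
          mul_assoc]
        have : z - x - (z - x') = x' - x := by abel
        rw [this]
      · have far : ∀ p : EuclideanSpace ℝ (Fin n), dist p x < R / 4 → kerR (R⁻¹ • (z - p)) = 0 := by
          intro p hp
          apply kerR_eq_zero
          rw [norm_smul, norm_inv, Real.norm_eq_abs, abs_of_pos hR, ← dist_eq_norm,
            ← div_eq_inv_mul, le_div_iff₀ hR]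
          simp only [mem_ball, not_lt] at hz
          linarith [dist_triangle z p x]
        rw [indicator_of_notMem hz, far x hxx, far x' hx']
        simp
  have hIRpos : 0 < IR := integral_kerR_pos
  calc |u x - u x'| * IR = ‖H 0‖ := by
        rw [hH0, norm_mul, Real.norm_eq_abs, Real.norm_eq_abs, abs_of_pos hIRpos]
    _ ≤ ‖H R - H 0‖ + ‖H R‖ := by
        have := norm_sub_le (H R) (H R - H 0)
        rw [sub_sub_cancel] at this; linarith
    _ ≤ R * (IP * (L * ‖x - x'‖)) * ‖R - 0‖
        + (R ^ n)⁻¹ * (8 * R⁻¹ * ‖x - x'‖ * ∫ z in ball x (3 / 2 * R), u z) := add_le_add hmvt hHR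
    _ = _ := by
        rw [sub_zero, Real.norm_eq_abs, abs_of_pos hR, pow_succ R n, mul_inv]; ring

/-! ### Hausdorff measure of spheres -/

lemma hausdorff_sphere_ne_top (hn : 2 ≤ n) :
    μH[(n-1:ℝ)] (sphere (0 : EuclideanSpace ℝ (Fin n)) 1) ≠ ∞ := by
  obtain ⟨m, rfl⟩ : ∃ m, n = m + 1 := ⟨n - 1, by omega⟩
  have hcast : (((m + 1 : ℕ) : ℝ) - 1) = (Fintype.card (Fin m) : ℝ) := by simp
  rw [hcast]
  set φ : Fin (m + 1) → ℝ → (Fin m → ℝ) → EuclideanSpace ℝ (Fin (m + 1)) := fun i s w =>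
    ‖(WithLp.toLp 2 (i.insertNth (α := fun _ => ℝ) s w) : EuclideanSpace ℝ (Fin (m + 1)))‖⁻¹ •
      (WithLp.toLp 2 (i.insertNth (α := fun _ => ℝ) s w) : EuclideanSpace ℝ (Fin (m + 1))) with hφ
  have hfin : ∀ i s, s ≠ 0 →
      μH[(Fintype.card (Fin m) : ℝ)] (φ i s '' Icc (fun _ => -1) (fun _ => 1)) ≠ ∞ := by
    intro i s hs
    have hz : ContDiff ℝ 1 fun w : Fin m → ℝ =>
        (WithLp.toLp 2 (i.insertNth (α := fun _ => ℝ) s w) : EuclideanSpace ℝ (Fin (m + 1))) := by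
      rw [contDiff_euclidean]
      intro j
      induction j using Fin.succAboveCases i with
      | x => simpa using contDiff_const
      | p j => simpa using contDiff_apply ℝ ℝ j
    have hne : ∀ w : Fin m → ℝ,
        (WithLp.toLp 2 (i.insertNth (α := fun _ => ℝ) s w) : EuclideanSpace ℝ (Fin (m + 1))) ≠ 0 := by
      intro w h
      have := congrArg (fun z : EuclideanSpace ℝ (Fin (m + 1)) => z i) h
      simp at this
      exact hs this
    have hc : ContDiff ℝ 1 (φ i s) :=
      ((hz.norm ℝ hne).inv fun w => norm_ne_zero_iff.2 (hne w)).smul hz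
    obtain ⟨K, hK⟩ := (hc.contDiffOn (s := Icc (fun _ => (-1 : ℝ)) (fun _ => 1))).exists_lipschitzOnWith
      one_ne_zero (convex_Icc _ _) isCompact_Icc
    refine ne_top_of_le_ne_top ?_ (hK.hausdorffMeasure_image_le (Nat.cast_nonneg _))
    refine ENNReal.mul_ne_top ?_ ?_
    · exact ENNReal.rpow_ne_top_of_nonneg (Nat.cast_nonneg _) ENNReal.coe_ne_top
    · rw [hausdorffMeasure_pi_real]
      exact isCompact_Icc.measure_lt_top.ne
  have hcov : sphere (0 : EuclideanSpace ℝ (Fin (m + 1))) 1 ⊆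
      ⋃ i : Fin (m + 1), (φ i 1 '' Icc (fun _ => -1) (fun _ => 1)) ∪
        (φ i (-1) '' Icc (fun _ => -1) (fun _ => 1)) := by
    intro y hy
    have hy1 : ‖y‖ = 1 := by simpa using hy
    obtain ⟨i, hi⟩ := Finite.exists_max fun j => |y j|
    have hyi : y i ≠ 0 := by
      intro h0
      have : y = 0 := by
        ext j
        have := hi j
        rw [h0, abs_zero] at this
        simpa using abs_nonpos_iff.1 this
      rw [this] at hy1; simp at hy1
    have habs : 0 < |y i| := abs_pos.2 hyi
    have main : φ i (y i / |y i|) (fun j => y (i.succAbove j) / |y i|) = y := by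
      have hvec : (WithLp.toLp 2 (i.insertNth (α := fun _ => ℝ) (y i / |y i|)
          (fun j => y (i.succAbove j) / |y i|)) : EuclideanSpace ℝ (Fin (m + 1))) = |y i|⁻¹ • y := by
        ext j
        induction j using Fin.succAboveCases i with
        | x => simp [div_eq_inv_mul]
        | p j => simp [div_eq_inv_mul]
      simp only [hφ, hvec, norm_smul, hy1, smul_smul]
      simp [habs.ne']
    have hmem : (fun j => y (i.succAbove j) / |y i|) ∈ Icc (fun _ => (-1 : ℝ)) (fun _ : Fin m => 1) := by
      constructor <;> intro j
      · show -1 ≤ y (i.succAbove j) / |y i|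
        rw [le_div_iff₀ habs]
        linarith [neg_abs_le (y (i.succAbove j)), hi (i.succAbove j)]
      · show y (i.succAbove j) / |y i| ≤ 1
        rw [div_le_iff₀ habs]
        linarith [le_abs_self (y (i.succAbove j)), hi (i.succAbove j)]
    rw [mem_iUnion]
    refine ⟨i, ?_⟩
    rcases lt_or_gt_of_ne hyi with h | h
    · right
      refine ⟨_, hmem, ?_⟩
      rw [show (-1 : ℝ) = y i / |y i| by rw [abs_of_neg h, div_neg, div_self h.ne]]
      exact main
    · left
      refine ⟨_, hmem, ?_⟩
      rw [show (1 : ℝ) = y i / |y i| by rw [abs_of_pos h, div_self h.ne']]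
      exact main
  refine ne_top_of_le_ne_top ?_ ((measure_mono hcov).trans (measure_iUnion_fintype_le _ _))
  refine ENNReal.sum_ne_top.2 fun i _ => ?_
  exact ne_top_of_le_ne_top (ENNReal.add_ne_top.2 ⟨hfin i 1 one_ne_zero, hfin i (-1) (by norm_num)⟩)
    (measure_union_le _ _)

open scoped Pointwise in
/-- The cone over a set of diameter `≤ ε` has volume `O(ε^{n-1})`. -/
lemma cone_volume_le (hn : 2 ≤ n) (A : Set (EuclideanSpace ℝ (Fin n))) (ε : ℝ) (hε : 0 < ε)
    (hε1 : ε ≤ 1) (hA : A ⊆ sphere 0 1) (hd : ∀ a ∈ A, ∀ b ∈ A, dist a b ≤ ε) :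
    volume (Ioo (0 : ℝ) 1 • A) ≤
      ENNReal.ofReal (2 * 3 ^ n * ε ^ ((n : ℝ) - 1)) *
        volume (ball (0 : EuclideanSpace ℝ (Fin n)) 1) := by
  have : Nonempty (Fin n) := ⟨⟨0, by omega⟩⟩
  rcases A.eq_empty_or_nonempty with rfl | ⟨ω, hω⟩
  · simp
  have hω1 : ‖ω‖ = 1 := by simpa using hA hω
  have hcov : Ioo (0 : ℝ) 1 • A ⊆
      ⋃ k ∈ Finset.range (⌊1 / ε⌋₊ + 1), ball (((k : ℝ) * ε) • ω) (3 * ε) := by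
    rintro _ ⟨t, ⟨ht0, ht1⟩, a, ha, rfl⟩
    simp only [mem_iUnion, Finset.mem_range, exists_prop]
    refine ⟨⌊t / ε⌋₊, ?_, ?_⟩
    · exact Nat.lt_succ_of_le (Nat.floor_le_floor (by gcongr))
    · rw [mem_ball]
      have h1 : dist (t • a) (t • ω) ≤ ε := by
        rw [dist_smul₀, Real.norm_eq_abs, abs_of_pos ht0]
        have := hd a ha ω hω
        nlinarith [dist_nonneg (x := a) (y := ω)]
      have h2 : dist (t • ω) (((⌊t / ε⌋₊ : ℝ) * ε) • ω) ≤ ε := by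
        rw [dist_eq_norm, ← sub_smul, norm_smul, hω1, mul_one, Real.norm_eq_abs, abs_le]
        have f1 := Nat.floor_le (by positivity : 0 ≤ t / ε)
        have f2 := Nat.lt_floor_add_one (t / ε)
        rw [le_div_iff₀ hε] at f1
        rw [div_lt_iff₀ hε] at f2
        constructor <;> nlinarith
      show dist (t • a) _ < _
      linarith [dist_triangle (t • a) (t • ω) (((⌊t / ε⌋₊ : ℝ) * ε) • ω)]
  refine (measure_mono hcov).trans ((measure_biUnion_finset_le _ _).trans ?_)
  have hball : ∀ k ∈ Finset.range (⌊1 / ε⌋₊ + 1),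
      volume (ball (((k : ℝ) * ε) • ω) (3 * ε)) = ENNReal.ofReal ((3 * ε) ^ n) *
        volume (ball (0 : EuclideanSpace ℝ (Fin n)) 1) := by
    intro k _
    rw [Measure.addHaar_ball _ _ (by positivity)]
    simp
  rw [Finset.sum_congr rfl hball, Finset.sum_const, Finset.card_range, nsmul_eq_mul, ← mul_assoc]
  gcongr
  rw [← ENNReal.ofReal_natCast, ← ENNReal.ofReal_mul (by positivity)]
  apply ENNReal.ofReal_le_ofReal
  have f1 : (⌊1 / ε⌋₊ : ℝ) ≤ 1 / ε := Nat.floor_le (by positivity)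
  have f2 : (1 : ℝ) ≤ 1 / ε := by rw [le_div_iff₀ hε]; linarith
  push_cast
  calc ((⌊1 / ε⌋₊ : ℝ) + 1) * (3 * ε) ^ n ≤ (2 * (1 / ε)) * (3 * ε) ^ n := by gcongr; linarith
    _ = 2 * 3 ^ n * (ε ^ n / ε) := by rw [mul_pow]; field_simp
    _ = _ := by
      rw [Real.rpow_sub hε, Real.rpow_natCast, Real.rpow_one]

lemma toSphere_le_hausdorff (hn : 2 ≤ n) :
    ∃ C : ℝ≥0∞, C ≠ 0 ∧ C ≠ ∞ ∧
      (volume : Measure (EuclideanSpace ℝ (Fin n))).toSphere ≤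
        C • (μH[(n-1:ℝ)] : Measure (sphere (0 : EuclideanSpace ℝ (Fin n)) 1)) := by
  have : Nonempty (Fin n) := ⟨⟨0, by omega⟩⟩
  have hn1 : (0 : ℝ) < (n : ℝ) - 1 := by
    have : (2 : ℝ) ≤ n := by exact_mod_cast hn
    linarith
  set V := volume (ball (0 : EuclideanSpace ℝ (Fin n)) 1) with hV
  have hVtop : V ≠ ∞ := measure_ball_lt_top.ne
  have hV0 : V ≠ 0 := (measure_ball_pos _ _ one_pos).ne'
  set C : ℝ≥0∞ := n * (ENNReal.ofReal (2 * 3 ^ n) * V) with hC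
  have hn0 : (n : ℝ≥0∞) ≠ 0 := by simp; omega
  have h3 : ENNReal.ofReal (2 * 3 ^ n) ≠ 0 := by simp
  have hC0 : C ≠ 0 := mul_ne_zero hn0 (mul_ne_zero h3 hV0)
  have hCtop : C ≠ ∞ := ENNReal.mul_ne_top (by simp) (ENNReal.mul_ne_top ENNReal.ofReal_ne_top hVtop)
  refine ⟨C, hC0, hCtop, ?_⟩
  -- bound for closed sets of small diameter
  have key : ∀ s : Set (sphere (0 : EuclideanSpace ℝ (Fin n)) 1), ∀ ε : ℝ, 0 < ε → ε ≤ 1 →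
      ediam s ≤ ENNReal.ofReal ε →
      (volume : Measure (EuclideanSpace ℝ (Fin n))).toSphere s ≤
        C * ENNReal.ofReal ε ^ ((n : ℝ) - 1) := by
    intro s ε hε hε1 hs
    refine (measure_mono subset_closure).trans ?_
    rw [Measure.toSphere_apply' _ isClosed_closure.measurableSet]
    have hs' : ediam (closure s) ≤ ENNReal.ofReal ε := by rwa [ediam_closure]
    have := cone_volume_le hn (Subtype.val '' closure s) ε hε hε1 ?_ ?_
    · rw [ENNReal.ofReal_mul (by positivity), ← ENNReal.ofReal_rpow_of_pos hε] at this
      rw [hC]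
      calc _ ≤ (n : ℝ≥0∞) * (ENNReal.ofReal (2 * 3 ^ n) * ENNReal.ofReal ε ^ ((n : ℝ) - 1) * V) := by
            simp only [finrank_euclideanSpace, Fintype.card_fin]
            gcongr
        _ = _ := by ring
    · rintro _ ⟨a, _, rfl⟩
      exact a.2
    · rintro _ ⟨a, ha, rfl⟩ _ ⟨b, hb, rfl⟩
      have h := (edist_le_ediam_of_mem ha hb).trans hs'
      rw [edist_dist] at h
      exact (ENNReal.ofReal_le_ofReal_iff hε.le).1 h
  have key2 : C⁻¹ • (volume : Measure (EuclideanSpace ℝ (Fin n))).toSphere ≤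
      (μH[(n-1:ℝ)] : Measure (sphere (0 : EuclideanSpace ℝ (Fin n)) 1)) := by
    refine Measure.le_hausdorffMeasure _ _ 1 one_pos fun s hs => ?_
    rw [Measure.smul_apply, smul_eq_mul, ← ENNReal.div_eq_inv_mul]
    refine ENNReal.div_le_of_le_mul' ?_
    rcases eq_or_ne (ediam s) 0 with h0 | h0
    · rw [h0, ENNReal.zero_rpow_of_pos hn1, mul_zero]
      have hlim : Tendsto (fun ε : ℝ => C * ENNReal.ofReal ε ^ ((n : ℝ) - 1)) (𝓝[>] 0) (𝓝 0) := by
        have h1 : Tendsto (fun ε : ℝ => ENNReal.ofReal ε ^ ((n : ℝ) - 1)) (𝓝[>] 0) (𝓝 0) := by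
          have : Continuous fun ε : ℝ => ENNReal.ofReal ε ^ ((n : ℝ) - 1) :=
            ENNReal.continuous_rpow_const.comp ENNReal.continuous_ofReal
          have h2 := this.tendsto 0
          simp only [ENNReal.ofReal_zero, ENNReal.zero_rpow_of_pos hn1] at h2
          exact h2.mono_left nhdsWithin_le_nhds
        simpa using ENNReal.Tendsto.const_mul h1 (Or.inr hCtop)
      refine ge_of_tendsto hlim ?_
      filter_upwards [Ioc_mem_nhdsGT one_pos] with ε hε
      exact key s ε hε.1 hε.2 (by rw [h0]; exact zero_le)
    · have htop : ediam s ≠ ∞ := ne_top_of_le_ne_top ENNReal.one_ne_top hs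
      have := key s (ediam s).toReal (ENNReal.toReal_pos h0 htop)
        (by simpa using ENNReal.toReal_mono ENNReal.one_ne_top hs)
        (by rw [ENNReal.ofReal_toReal htop])
      rwa [ENNReal.ofReal_toReal htop] at this
  intro s
  have := key2 s
  rw [Measure.smul_apply, smul_eq_mul, ← ENNReal.div_eq_inv_mul,
    ENNReal.div_le_iff' hC0 hCtop] at this
  simpa using this

/-! ### Polar coordinates -/

lemma lintegral_polar (hn : 2 ≤ n) (G : EuclideanSpace ℝ (Fin n) → ℝ≥0∞) (hG : Measurable G) :
    ∫⁻ y, G y = ∫⁻ r : Ioi (0 : ℝ), ∫⁻ ω : sphere (0 : EuclideanSpace ℝ (Fin n)) 1,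
      G (r.1 • ω.1) ∂(volume : Measure (EuclideanSpace ℝ (Fin n))).toSphere
        ∂(Measure.volumeIoiPow (n - 1)) := by
  have : Nonempty (Fin n) := ⟨⟨0, by omega⟩⟩
  have hmp := (volume : Measure (EuclideanSpace ℝ (Fin n))).measurePreserving_homeomorphUnitSphereProd
  simp only [finrank_euclideanSpace, Fintype.card_fin] at hmp
  have hmeas : Measurable fun p : sphere (0 : EuclideanSpace ℝ (Fin n)) 1 × Ioi (0 : ℝ) =>
      G (p.2.1 • p.1.1) := by
    refine hG.comp ?_
    exact (measurable_subtype_coe.comp measurable_snd).smul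
      (measurable_subtype_coe.comp measurable_fst)
  calc ∫⁻ y, G y = ∫⁻ y in ({0}ᶜ : Set (EuclideanSpace ℝ (Fin n))), G y := by
        rw [restrict_compl_singleton]
    _ = ∫⁻ y : ({0}ᶜ : Set (EuclideanSpace ℝ (Fin n))), G y ∂(volume.comap Subtype.val) := by
        rw [lintegral_subtype_comap (measurableSet_singleton _).compl]
    _ = ∫⁻ y : ({0}ᶜ : Set (EuclideanSpace ℝ (Fin n))),
          G ((homeomorphUnitSphereProd _ y).2.1 • (homeomorphUnitSphereProd _ y).1.1)
            ∂(volume.comap Subtype.val) := by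
        refine lintegral_congr fun y => ?_
        have h0 : ‖(y : EuclideanSpace ℝ (Fin n))‖ ≠ 0 := norm_ne_zero_iff.2 y.2
        congr 1
        simp [smul_smul, h0]
    _ = ∫⁻ p, G (p.2.1 • p.1.1) ∂((volume : Measure (EuclideanSpace ℝ (Fin n))).toSphere.prod
          (Measure.volumeIoiPow (n - 1))) := hmp.lintegral_comp hmeas
    _ = _ := lintegral_prod_symm' _ hmeas

open scoped Pointwise in
lemma hausdorff_scale (hn : 2 ≤ n) (F : EuclideanSpace ℝ (Fin n) → ℝ≥0∞) (hF : Measurable F)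
    (z : EuclideanSpace ℝ (Fin n)) (r : ℝ) (hr : 0 < r) :
    ∫⁻ y in sphere z r, F y ∂(μH[(n-1:ℝ)]) =
      (‖r‖₊ ^ ((n : ℝ) - 1) : ℝ≥0) *
        ∫⁻ ω in sphere (0 : EuclideanSpace ℝ (Fin n)) 1, F (z + r • ω) ∂(μH[(n-1:ℝ)]) := by
  have hn1 : (0 : ℝ) ≤ (n : ℝ) - 1 := by
    have : (2 : ℝ) ≤ n := by exact_mod_cast hn
    linarith
  set c : ℝ≥0 := ‖r‖₊ ^ ((n : ℝ) - 1) with hc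
  set T : EuclideanSpace ℝ (Fin n) → EuclideanSpace ℝ (Fin n) := fun ω => z + r • ω with hT
  have hTm : Measurable T := by fun_prop
  have hTs : ∀ y, T (r⁻¹ • (y - z)) = y := by
    intro y
    simp [hT, smul_smul, hr.ne']
  have hmap : (μH[(n-1:ℝ)] : Measure (EuclideanSpace ℝ (Fin n))) =
      (c : ℝ≥0∞) • Measure.map T μH[(n-1:ℝ)] := by
    ext s hs
    rw [Measure.smul_apply, Measure.map_apply hTm hs]
    have h1 : s = (fun y => z + y) '' (r • (T ⁻¹' s)) := by
      ext y
      constructor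
      · intro hy
        refine ⟨y - z, ⟨r⁻¹ • (y - z), ?_, ?_⟩, by simp⟩
        · show T _ ∈ s
          rwa [hTs]
        · simp [smul_smul, hr.ne']
      · rintro ⟨_, ⟨w, hw, rfl⟩, rfl⟩
        exact hw
    conv_lhs => rw [h1]
    rw [(isometry_add_left z).hausdorffMeasure_image (Or.inl hn1),
      Measure.hausdorffMeasure_smul₀ hn1 hr.ne']
    rfl
  have hpre : T ⁻¹' sphere z r = sphere 0 1 := by
    ext w
    simp only [hT, mem_preimage, mem_sphere, dist_eq_norm, add_sub_cancel_left, norm_smul,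
      Real.norm_eq_abs, abs_of_pos hr, sub_zero]
    constructor
    · intro h; exact mul_left_cancel₀ hr.ne' (by rw [h, mul_one])
    · intro h; rw [h, mul_one]
  conv_lhs => rw [hmap]
  rw [Measure.restrict_smul, lintegral_smul_measure,
    setLIntegral_map isClosed_sphere.measurableSet hF hTm, hpre]
  rfl

lemma polar_bound (hn : 2 ≤ n) : ∃ K : ℝ, 0 ≤ K ∧
    ∀ (u : EuclideanSpace ℝ (Fin n) → ℝ) (z : EuclideanSpace ℝ (Fin n)) (ρ C : ℝ), 0 < ρ →
      ContinuousOn u (ball z ρ) → (∀ y ∈ ball z ρ, 0 ≤ u y) →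
      (∀ r, 0 < r → r < ρ → (1/r) * ⨍ y in sphere z r, u y ∂(μH[(n-1:ℝ)]) ≤ C) →
      ∫ y in ball z ρ, u y ≤ K * |C| * ρ ^ (n + 1) := by
  have hn1 : (0 : ℝ) ≤ (n : ℝ) - 1 := by
    have : (2 : ℝ) ≤ n := by exact_mod_cast hn
    linarith
  obtain ⟨C₀, -, hC₀top, hC₀⟩ := toSphere_le_hausdorff hn
  set S := μH[(n-1:ℝ)] (sphere (0 : EuclideanSpace ℝ (Fin n)) 1) with hS
  have hStop : S ≠ ∞ := hausdorff_sphere_ne_top hn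
  refine ⟨(C₀ * S).toReal, ENNReal.toReal_nonneg, ?_⟩
  intro u z ρ C hρ huc hu0 hav
  set U : EuclideanSpace ℝ (Fin n) → ℝ≥0∞ :=
    (ball z ρ).indicator (fun y => ENNReal.ofReal (u y)) with hU
  have hUm : Measurable U := by
    have h1 : Measurable ((ball z ρ).indicator u) := by
      refine measurable_of_restrict_of_restrict_compl
        (measurableSet_ball (x := z) (ε := ρ)) ?_ ?_
      · have hm := huc.domRestrict.measurable
        convert hm using 1
        ext y
        exact indicator_of_mem y.2 u
      · have hm : Measurable fun _ : ((ball z ρ)ᶜ : Set (EuclideanSpace ℝ (Fin n))) => (0 : ℝ) :=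
          measurable_const
        convert hm using 1
        ext y
        exact indicator_of_notMem y.2 u
    have h2 : U = fun y => ENNReal.ofReal ((ball z ρ).indicator u y) := by
      ext y
      by_cases hy : y ∈ ball z ρ <;> simp [hU, hy]
    rw [h2]
    exact h1.ennreal_ofReal
  -- spherical bound
  have hsph : ∀ r, 0 < r → r < ρ →
      ∫⁻ ω in sphere (0 : EuclideanSpace ℝ (Fin n)) 1, U (z + r • ω) ∂(μH[(n-1:ℝ)])
        ≤ S * ENNReal.ofReal (|C| * ρ) := by
    intro r hr hrρ
    set c : ℝ≥0 := ‖r‖₊ ^ ((n : ℝ) - 1) with hc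
    have hc0 : (c : ℝ≥0∞) ≠ 0 := by
      have : 0 < c := NNReal.rpow_pos (by simpa using hr.ne')
      exact_mod_cast this.ne'
    have hmeas : μH[(n-1:ℝ)] (sphere z r) = c * S := by
      have := hausdorff_scale hn (fun _ => 1) measurable_const z r hr
      simpa using this
    have hmt : μH[(n-1:ℝ)] (sphere z r) ≠ ∞ := by
      rw [hmeas]; exact ENNReal.mul_ne_top ENNReal.coe_ne_top hStop
    have hsub : sphere z r ⊆ ball z ρ := fun y hy => by
      rw [mem_sphere] at hy; rw [mem_ball, hy]; exact hrρ
    have hint : IntegrableOn u (sphere z r) μH[(n-1:ℝ)] := by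
      obtain ⟨M, hM⟩ := (isCompact_sphere z r).exists_bound_of_continuousOn (huc.mono hsub)
      refine IntegrableOn.of_bound (lt_top_iff_ne_top.2 hmt)
        ((huc.mono hsub).aestronglyMeasurable isClosed_sphere.measurableSet) M ?_
      filter_upwards [ae_restrict_mem isClosed_sphere.measurableSet] with y hy using hM y hy
    have h1 : ∫⁻ y in sphere z r, U y ∂(μH[(n-1:ℝ)]) ≤ c * (S * ENNReal.ofReal (|C| * ρ)) := by
      calc ∫⁻ y in sphere z r, U y ∂(μH[(n-1:ℝ)])
          = ∫⁻ y in sphere z r, ENNReal.ofReal (u y) ∂(μH[(n-1:ℝ)]) := by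
            refine setLIntegral_congr_fun isClosed_sphere.measurableSet fun y hy => ?_
            simp only [hU]
            rw [indicator_of_mem (hsub hy)]
        _ = ENNReal.ofReal (∫ y in sphere z r, u y ∂(μH[(n-1:ℝ)])) := by
            rw [ofReal_integral_eq_lintegral_ofReal hint]
            filter_upwards [ae_restrict_mem isClosed_sphere.measurableSet] with y hy
            exact hu0 y (hsub hy)
        _ ≤ ENNReal.ofReal ((μH[(n-1:ℝ)]).real (sphere z r) * (|C| * ρ)) := by
            rw [← measure_smul_setAverage _ hmt, smul_eq_mul]
            refine ENNReal.ofReal_le_ofReal (mul_le_mul_of_nonneg_left ?_ measureReal_nonneg)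
            have h := hav r hr hrρ
            rw [one_div, inv_mul_le_iff₀ hr] at h
            nlinarith [le_abs_self C, abs_nonneg C]
        _ = _ := by
            rw [ENNReal.ofReal_mul measureReal_nonneg, ofReal_measureReal hmt, hmeas, mul_assoc]
    rw [hausdorff_scale hn U hUm z r hr] at h1
    exact (ENNReal.mul_le_mul_iff_right hc0 ENNReal.coe_ne_top).1 h1
  have hσ : ∀ r : ℝ, 0 < r →
      ∫⁻ ω : sphere (0 : EuclideanSpace ℝ (Fin n)) 1, U (z + r • ω.1)
        ∂(volume : Measure (EuclideanSpace ℝ (Fin n))).toSphere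
      ≤ C₀ * ∫⁻ ω in sphere (0 : EuclideanSpace ℝ (Fin n)) 1, U (z + r • ω) ∂(μH[(n-1:ℝ)]) := by
    intro r hr
    refine (lintegral_mono' hC₀ le_rfl).trans ?_
    rw [lintegral_smul_measure, smul_eq_mul]
    have hm : Measurable fun ω => U (z + r • ω) := hUm.comp (by fun_prop)
    have h2 := (isometry_subtype_coe (s := sphere (0 : EuclideanSpace ℝ (Fin n)) 1)).map_hausdorffMeasure
      (d := (n:ℝ) - 1) (Or.inl hn1)
    rw [Subtype.range_coe] at h2
    rw [← h2, lintegral_map hm measurable_subtype_coe]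
  have htot : ∫⁻ y, U y ≤ C₀ * S * ENNReal.ofReal (|C| * ρ) * ENNReal.ofReal (ρ ^ n) := by
    rw [← lintegral_add_left_eq_self U z, lintegral_polar hn (fun y => U (z + y))
      (hUm.comp (by fun_prop))]
    calc _ ≤ ∫⁻ r : Ioi (0 : ℝ), (Iio (⟨ρ, hρ⟩ : Ioi (0 : ℝ))).indicator
          (fun _ => C₀ * S * ENNReal.ofReal (|C| * ρ)) r ∂(Measure.volumeIoiPow (n - 1)) := by
          refine lintegral_mono fun r => ?_
          by_cases hr : r < (⟨ρ, hρ⟩ : Ioi (0 : ℝ))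
          · rw [indicator_of_mem (by exact hr)]
            refine (hσ r.1 r.2).trans ?_
            rw [mul_assoc]
            gcongr
            exact hsph r.1 r.2 hr
          · have hr' : ρ ≤ r.1 := not_lt.1 hr
            have : ∀ ω : sphere (0 : EuclideanSpace ℝ (Fin n)) 1, U (z + r.1 • ω.1) = 0 := by
              intro ω
              refine indicator_of_notMem ?_ _
              have hω : ‖ω.1‖ = 1 := by simp
              have hr0 : (0 : ℝ) < r.1 := r.2
              rw [mem_ball, dist_eq_norm, add_sub_cancel_left, norm_smul, hω, mul_one,
                Real.norm_eq_abs, abs_of_pos hr0]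
              exact not_lt.2 hr'
            simp only [this, lintegral_zero]
            exact zero_le
      _ = C₀ * S * ENNReal.ofReal (|C| * ρ) * ENNReal.ofReal (ρ ^ n / n) := by
          rw [lintegral_indicator_const measurableSet_Iio, Measure.volumeIoiPow_apply_Iio]
          congr 3
          · congr 1; omega
          · rw [Nat.cast_sub (by omega)]; simp
      _ ≤ _ := by
          gcongr
          apply div_le_self (by positivity)
          have : (2 : ℝ) ≤ n := by exact_mod_cast hn
          linarith
  have hfin : C₀ * S * ENNReal.ofReal (|C| * ρ) * ENNReal.ofReal (ρ ^ n) ≠ ∞ := by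
    refine ENNReal.mul_ne_top (ENNReal.mul_ne_top (ENNReal.mul_ne_top hC₀top hStop) ?_) ?_ <;>
      exact ENNReal.ofReal_ne_top
  have hUint : ∫⁻ y, U y = ∫⁻ y in ball z ρ, ENNReal.ofReal (u y) := by
    rw [hU, lintegral_indicator measurableSet_ball]
  rw [integral_eq_lintegral_of_nonneg_ae, ← hUint]
  · refine (ENNReal.toReal_mono hfin htot).trans (le_of_eq ?_)
    rw [ENNReal.toReal_mul, ENNReal.toReal_mul, ENNReal.toReal_ofReal (by positivity),
      ENNReal.toReal_ofReal (by positivity)]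
    ring
  · filter_upwards [ae_restrict_mem measurableSet_ball] with y hy using hu0 y hy
  · exact huc.aestronglyMeasurable measurableSet_ball

/-! ### From local to global -/

lemma lip_of_local (s : Set (EuclideanSpace ℝ (Fin n))) (hs : Convex ℝ s)
    (u : EuclideanSpace ℝ (Fin n) → ℝ) (hu : ContinuousOn u s) (hu0 : ∀ x ∈ s, 0 ≤ u x)
    (M : ℝ) (hM : 0 ≤ M)
    (hloc : ∀ x ∈ s, 0 < u x → ∃ ε > 0, ∀ x', dist x' x < ε → |u x - u x'| ≤ M * ‖x - x'‖)
    (x y : EuclideanSpace ℝ (Fin n)) (hx : x ∈ s) (hy : y ∈ s) :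
    u x - u y ≤ M * ‖x - y‖ := by
  set γ : ℝ → EuclideanSpace ℝ (Fin n) := fun t => x + t • (y - x) with hγ
  have hγc : Continuous γ := by fun_prop
  have hγs : ∀ t ∈ Icc (0 : ℝ) 1, γ t ∈ s := fun t ht => hs.add_smul_sub_mem hx hy ht
  have hdist : ∀ a b : ℝ, ‖γ a - γ b‖ = |a - b| * ‖x - y‖ := by
    intro a b
    have : γ a - γ b = (a - b) • (y - x) := by simp only [hγ, sub_smul]; abel
    rw [this, norm_smul, Real.norm_eq_abs, norm_sub_rev]
  have hsub : Icc (0 : ℝ) 1 ⊆ {t | u x - u (γ t) ≤ M * (t * ‖x - y‖)} := by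
    refine IsClosed.Icc_subset_of_forall_exists_gt ?_ ?_ ?_
    · have hc : ContinuousOn (fun t => u x - u (γ t)) (Icc 0 1) :=
        continuousOn_const.sub (hu.comp hγc.continuousOn hγs)
      have := isClosed_Icc.isClosed_le hc
        (by fun_prop : ContinuousOn (fun t : ℝ => M * (t * ‖x - y‖)) (Icc 0 1))
      convert this using 1
      ext t; exact and_comm
    · simp [hγ]
    · rintro t ⟨ht, ht0, ht1⟩ b hb
      simp only [mem_ofPred_eq] at ht
      have hts := hγs t ⟨ht0, ht1.le⟩
      rcases (hu0 _ hts).eq_or_lt with h0 | hpos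
      · refine ⟨min 1 b, ?_, lt_min ht1 hb, min_le_right _ _⟩
        simp only [mem_ofPred_eq]
        have hm : t ≤ min 1 b := (lt_min ht1 hb).le
        have h1 := hu0 _ (hγs (min 1 b) ⟨ht0.trans hm, min_le_left _ _⟩)
        have h2 : M * (t * ‖x - y‖) ≤ M * (min 1 b * ‖x - y‖) := by gcongr
        linarith
      · obtain ⟨ε, hε, hl⟩ := hloc _ hts hpos
        have hev : ∀ᶠ t' in 𝓝 t, dist (γ t') (γ t) < ε :=
          hγc.continuousAt.eventually (ball_mem_nhds _ hε)
        have hev' : ∀ᶠ t' in 𝓝[>] t, dist (γ t') (γ t) < ε := hev.filter_mono nhdsWithin_le_nhds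
        obtain ⟨t', h1, h2⟩ := (hev'.and (Ioc_mem_nhdsGT hb)).exists
        refine ⟨t', ?_, h2⟩
        have h3 := hl _ h1
        rw [hdist, abs_sub_comm t, abs_of_pos (sub_pos.2 h2.1)] at h3
        have h4 := (abs_le.1 h3).2
        simp only [mem_ofPred_eq]
        calc u x - u (γ t') = (u x - u (γ t)) + (u (γ t) - u (γ t')) := by ring
          _ ≤ M * (t * ‖x - y‖) + M * ((t' - t) * ‖x - y‖) := add_le_add ht h4
          _ = _ := by ring
  have := hsub (right_mem_Icc.2 zero_le_one)
  simpa [hγ] using this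

/-- **Proposition 2.6.** A continuous nonnegative function `u` on `B₁` with `Δu = -f` on `{u > 0}`
satisfying the upper bound in condition (ii) of the definition of weak solution is
locally Lipschitz in `B₁`. -/
theorem weak_solution_locally_lipschitz
    (hn : 2 ≤ n) (f u : EuclideanSpace ℝ (Fin n) → ℝ)
    (hf : ContDiffOn ℝ (⊤ : ℕ∞) f (ball 0 1))
    (hu : ContinuousOn u (ball 0 1))
    (hu0 : ∀ x ∈ ball (0 : EuclideanSpace ℝ (Fin n)) 1, 0 ≤ u x)
    (hc2 : ContDiffOn ℝ 2 u (posSet u))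
    (heqn : ∀ x ∈ posSet u, lap u x = - f x)
    (hub : ∀ D : Set (EuclideanSpace ℝ (Fin n)), IsOpen D →
      closure D ⊆ ball (0 : EuclideanSpace ℝ (Fin n)) 1 →
      ∃ C : ℝ, ∀ x r, 0 < r → ball x r ⊆ D → x ∈ frontier (posSet u) →
        (1/r) * ⨍ y in sphere x r, u y ∂(μH[(n-1:ℝ)]) ≤ C) :
    ∀ δ : ℝ, 0 < δ → δ < 1 →
      ∃ C : ℝ≥0, LipschitzOnWith C u (ball (0 : EuclideanSpace ℝ (Fin n)) (1 - δ)) := by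
  intro δ hδ hδ1
  have : Nonempty (Fin n) := ⟨⟨0, by omega⟩⟩
  set ρ₁ : ℝ := 1 - δ / 2 with hρ₁
  have hcb : closedBall (0 : EuclideanSpace ℝ (Fin n)) ρ₁ ⊆ ball 0 1 :=
    closedBall_subset_ball (by linarith)
  have hbb : ball (0 : EuclideanSpace ℝ (Fin n)) ρ₁ ⊆ ball 0 1 :=
    ball_subset_closedBall.trans hcb
  obtain ⟨C, hC⟩ := hub (ball 0 ρ₁) isOpen_ball (closure_ball_subset_closedBall.trans hcb)
  obtain ⟨K, hK0, hK⟩ := polar_bound hn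
  obtain ⟨L, hL⟩ := (hf.mono hcb).exists_lipschitzOnWith (by simp) (convex_closedBall _ _)
    (isCompact_closedBall _ _)
  set J := ∫ y in ball (0 : EuclideanSpace ℝ (Fin n)) ρ₁, u y with hJ
  have hint : IntegrableOn u (ball (0 : EuclideanSpace ℝ (Fin n)) ρ₁) :=
    ((hu.mono hcb).integrableOn_compact (isCompact_closedBall _ _)).mono_set ball_subset_closedBall
  have hJ0 : 0 ≤ J := setIntegral_nonneg measurableSet_ball fun y hy => hu0 y (hbb hy)
  have hmono : ∀ s t : Set (EuclideanSpace ℝ (Fin n)), MeasurableSet t → s ⊆ t → t ⊆ ball 0 ρ₁ →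
      ∫ y in s, u y ≤ ∫ y in t, u y := by
    intro s t htm hst ht
    refine setIntegral_mono_set (hint.mono_set ht) ?_ (LE.le.eventuallyLE hst)
    filter_upwards [ae_restrict_mem htm] with y hy using hu0 y (hbb (ht hy))
  set A := J / (δ / 16) ^ (n + 1) + K * |C| * 4 ^ (n + 1) with hA
  have hA0 : 0 ≤ A := by positivity
  have hpo : IsOpen (posSet u) := by
    have : posSet u = ball 0 1 ∩ u ⁻¹' Ioi 0 := rfl
    rw [this]
    exact hu.isOpen_inter_preimage isOpen_ball isOpen_Ioi
  have hne : (posSet u)ᶜ.Nonempty := by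
    obtain ⟨w, hw⟩ := NormedSpace.exists_lt_norm ℝ (EuclideanSpace ℝ (Fin n)) 1
    refine ⟨w, fun h => ?_⟩
    have := h.1
    rw [mem_ball_zero_iff] at this
    linarith
  have claim : ∀ x ∈ ball (0 : EuclideanSpace ℝ (Fin n)) (1 - δ), 0 < u x →
      ∃ R, 0 < R ∧ R ≤ 1 ∧ ball x (2 * R) ⊆ posSet u ∧ ball x (2 * R) ⊆ ball 0 ρ₁ ∧
        ∫ y in ball x (3 / 2 * R), u y ≤ A * R ^ (n + 1) := by
    intro x hx hux
    have hx0 : dist x 0 < 1 - δ := hx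
    have hxp : x ∈ posSet u := ⟨ball_subset_ball (by linarith) hx, hux⟩
    obtain ⟨z, hz, hdz⟩ := hpo.isClosed_compl.exists_infDist_eq_dist hne x
    set d := dist x z with hd
    have hd0 : 0 < d := dist_pos.2 fun h => hz (h ▸ hxp)
    have hball : ball x d ⊆ posSet u := by
      intro w hw
      by_contra hcon
      have := infDist_le_dist_of_mem (x := x) (show w ∈ (posSet u)ᶜ from hcon)
      rw [hdz] at this
      rw [mem_ball, dist_comm] at hw
      linarith
    rcases le_or_gt (δ / 8) d with h | h
    · refine ⟨δ / 16, by positivity, by linarith, ?_, ?_, ?_⟩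
      · exact (ball_subset_ball (by linarith)).trans hball
      · exact ball_subset_ball' (by linarith)
      · have h1 : ∫ y in ball x (3 / 2 * (δ / 16)), u y ≤ J :=
          hmono _ _ measurableSet_ball (ball_subset_ball' (by linarith)) subset_rfl
        refine h1.trans ?_
        rw [hA, add_mul, div_mul_cancel₀ _ (by positivity)]
        have : 0 ≤ K * |C| * 4 ^ (n + 1) * (δ / 16) ^ (n + 1) := by positivity
        linarith
    · have hzf : z ∈ frontier (posSet u) := by
        rw [frontier, hpo.interior_eq]
        refine ⟨closure_mono hball ?_, hz⟩
        rw [closure_ball _ hd0.ne', mem_closedBall, dist_comm]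
      have hzx : dist z x = d := dist_comm z x
      have hz0 : dist z 0 < 1 - δ + d := by linarith [dist_triangle z x 0]
      have hzD : ball z (2 * d) ⊆ ball 0 ρ₁ := ball_subset_ball' (by linarith)
      refine ⟨d / 2, by positivity, by linarith, ?_, ?_, ?_⟩
      · exact (ball_subset_ball (by linarith)).trans hball
      · exact ball_subset_ball' (by linarith)
      · have h1 : ∫ y in ball x (3 / 2 * (d / 2)), u y ≤ ∫ y in ball z (2 * d), u y :=
          hmono _ _ measurableSet_ball (ball_subset_ball' (by linarith)) hzD
        have h2 := hK u z (2 * d) C (by positivity) (hu.mono (hzD.trans hbb))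
          (fun y hy => hu0 y (hbb (hzD hy)))
          (fun r hr hr2 => hC z r hr ((ball_subset_ball hr2.le).trans hzD) hzf)
        refine h1.trans (h2.trans ?_)
        have h3 : (2 * d) ^ (n + 1) = 4 ^ (n + 1) * (d / 2) ^ (n + 1) := by
          rw [← mul_pow]; congr 1; ring
        rw [h3, hA, add_mul]
        have : 0 ≤ J / (δ / 16) ^ (n + 1) * (d / 2) ^ (n + 1) := by positivity
        linarith
  set IR := ∫ y : EuclideanSpace ℝ (Fin n), kerR y with hIR
  set IP := ∫ y : EuclideanSpace ℝ (Fin n), kerP y with hIP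
  have hIR0 : 0 < IR := integral_kerR_pos
  have hIP0 : 0 ≤ IP := integral_nonneg fun y => kerP_nonneg y
  set M := (L * IP + 8 * A) / IR with hM
  have hM0 : 0 ≤ M := by positivity
  have hloc : ∀ x ∈ ball (0 : EuclideanSpace ℝ (Fin n)) (1 - δ), 0 < u x →
      ∃ ε > 0, ∀ x', dist x' x < ε → |u x - u x'| ≤ M * ‖x - x'‖ := by
    intro x hx hux
    obtain ⟨R, hR, hR1, hRp, hRD, hRI⟩ := claim x hx hux
    refine ⟨R / 4, by positivity, fun x' hx' => ?_⟩
    have h := local_est f u x x' R L hR (hc2.mono hRp) (fun z hz => heqn z (hRp hz))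
      (fun z hz z' hz' => by
        have := hL.dist_le_mul z (ball_subset_closedBall (hRD hz)) z'
          (ball_subset_closedBall (hRD hz'))
        rwa [Real.dist_eq, dist_eq_norm] at this)
      (fun z hz => (hRp hz).2.le) hx'
    rw [hM, div_mul_eq_mul_div, le_div_iff₀ hIR0]
    refine h.trans (mul_le_mul_of_nonneg_right ?_ (norm_nonneg _))
    have e1 : R ^ 2 * L * IP ≤ L * IP := by
      have : R ^ 2 ≤ 1 := pow_le_one₀ hR.le hR1
      have h0 : 0 ≤ (L : ℝ) * IP := by positivity
      rw [mul_assoc]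
      nlinarith
    have e2 : 8 * (R ^ (n + 1))⁻¹ * ∫ z in ball x (3 / 2 * R), u z ≤ 8 * A := by
      rw [mul_assoc]
      refine mul_le_mul_of_nonneg_left ?_ (by norm_num)
      rw [inv_mul_le_iff₀ (by positivity), mul_comm _ A]
      exact hRI
    exact add_le_add e1 e2
  have hsub1 : ball (0 : EuclideanSpace ℝ (Fin n)) (1 - δ) ⊆ ball 0 1 :=
    ball_subset_ball (by linarith)
  have hlip := lip_of_local (ball (0 : EuclideanSpace ℝ (Fin n)) (1 - δ)) (convex_ball _ _) u
    (hu.mono hsub1) (fun x hx => hu0 x (hsub1 hx)) M hM0 hloc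
  refine ⟨M.toNNReal, LipschitzOnWith.of_dist_le_mul fun x hx y hy => ?_⟩
  rw [Real.dist_eq, dist_eq_norm, Real.coe_toNNReal _ hM0, abs_le]
  have h1 := hlip x y hx hy
  have h2 := hlip y x hy hx
  rw [norm_sub_rev] at h2
  constructor <;> linarith
end
end

section
/- Let n ≥ 2 and f ∈ C^∞(B₁), and let Q₀ > 0. There exist constants δ₀, κ₀, C₁, C₂ > 0, depending only on n, ‖f‖_{L^∞(B₁)} and Q₀, such that the following holds for all 0 < δ ≤ δ₀ and 0 < κ ≤ κ₀. Let u : B₁ → ℝ be continuous and nonnegative, C² on the open set {u > 0} with Δu = −f there, let x₀ ∈ B₁, let ν ∈ ℝⁿ be a unit vector, and let r > 0 be such that B_{r/κ}(x₀) ⊆ B₁ and |u(x) − Q₀ ((x − x₀)·ν)₊| ≤ δ r for all x ∈ B_{r/κ}(x₀). Then |∇u(x) − Q₀ ν| ≤ C₁ Q₀ (δ + κ) for every x ∈ B_{r/(2κ)}(x₀) with u(x) = r, and μH^{n−1}({x ∈ B_{r/(2κ)}(x₀) : u(x) = r}) ≤ C₂ (r/κ)^{n−1}. -/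
open MeasureTheory Metric Set Filter
open scoped ENNReal RealInnerProductSpace Topology NNReal

noncomputable section

variable {n : ℕ}

/-- Second derivative at an interior local maximum is nonpositive. -/
lemma second_deriv_nonpos {h h' : ℝ → ℝ} {d : ℝ}
    (h1 : ∀ᶠ s in 𝓝 (0:ℝ), HasDerivAt h (h' s) s) (h2 : HasDerivAt h' d 0)
    (hm : IsLocalMax h 0) : d ≤ 0 := by
  by_contra hd
  push Not at hd
  have e : deriv h =ᶠ[𝓝 0] h' := h1.mono fun s hs => hs.deriv
  have e2 : deriv (deriv h) 0 = d := by rw [e.deriv_eq]; exact h2.deriv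
  have hmin : IsLocalMin h 0 := isLocalMin_of_deriv_deriv_pos (by rw [e2]; exact hd)
    hm.deriv_eq_zero h1.self_of_nhds.continuousAt
  have hc : h =ᶠ[𝓝 0] fun _ => h 0 := by
    filter_upwards [hm, hmin] with s a b
    exact le_antisymm a b
  have e3 : deriv h =ᶠ[𝓝 0] fun _ => 0 := by
    have := hc.deriv
    simpa using this
  have : deriv (deriv h) 0 = 0 := by rw [e3.deriv_eq]; simp
  linarith

/-- A `C²` function restricted to a line. -/
lemma line_derivs {w : EuclideanSpace ℝ (Fin n) → ℝ} {W : Set (EuclideanSpace ℝ (Fin n))}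
    (hW : IsOpen W) (hw : ContDiffOn ℝ 2 w W) {x : EuclideanSpace ℝ (Fin n)} (hx : x ∈ W)
    (v : EuclideanSpace ℝ (Fin n)) :
    (∀ᶠ s in 𝓝 (0:ℝ), HasDerivAt (fun s : ℝ => w (x + s • v)) (fderiv ℝ w (x + s • v) v) s) ∧
    HasDerivAt (fun s : ℝ => fderiv ℝ w (x + s • v) v)
      (fderiv ℝ (fun y => fderiv ℝ w y v) x v) 0 := by
  have hl : ∀ s : ℝ, HasDerivAt (fun s : ℝ => x + s • v) v s := by
    intro s
    simpa using ((hasDerivAt_id s).smul_const v).const_add x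
  have hcont : ContinuousAt (fun s : ℝ => x + s • v) 0 := (hl 0).continuousAt
  constructor
  · have : ∀ᶠ s in 𝓝 (0:ℝ), x + s • v ∈ W :=
      hcont.eventually (by simpa using hW.mem_nhds hx)
    filter_upwards [this] with s hs
    have hd : DifferentiableAt ℝ w (x + s • v) :=
      (hw.contDiffAt (hW.mem_nhds hs)).differentiableAt (by norm_num)
    exact hd.hasFDerivAt.comp_hasDerivAt s (hl s)
  · have hd : DifferentiableAt ℝ (fun y => fderiv ℝ w y v) x := by
      have h1 : ContDiffAt ℝ 1 (fderiv ℝ w) x :=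
        (hw.contDiffAt (hW.mem_nhds hx)).fderiv_right (by norm_num)
      exact (h1.differentiableAt (by norm_num)).clm_apply (differentiableAt_const v)
    have hd' : HasFDerivAt (fun y => fderiv ℝ w y v) (fderiv ℝ (fun y => fderiv ℝ w y v) x)
        (x + (0:ℝ) • v) := by simpa using hd.hasFDerivAt
    exact hd'.comp_hasDerivAt (0:ℝ) (hl 0)

/-- One-sided bound of a partial derivative by comparison. -/
lemma partial_le {w : EuclideanSpace ℝ (Fin n) → ℝ} {W : Set (EuclideanSpace ℝ (Fin n))}
    (hW : IsOpen W) (hw : ContDiffOn ℝ 2 w W) {p : EuclideanSpace ℝ (Fin n)} {ρ S N : ℝ}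
    (hρ : 0 < ρ) (hN : 0 ≤ N) (hpW : closedBall p ρ ⊆ W)
    (hS : ∀ x ∈ closedBall p ρ, |w x| ≤ S) (hL : ∀ x ∈ closedBall p ρ, |lap w x| ≤ N)
    (i : Fin n) :
    fderiv ℝ w p (EuclideanSpace.single i 1) ≤ n * S / ρ + (N + 1) / 2 * ρ := by
  set e : Fin n → EuclideanSpace ℝ (Fin n) := fun j => EuclideanSpace.single j 1 with he
  have hS0 : 0 ≤ S := (abs_nonneg _).trans (hS p (mem_closedBall_self hρ.le))
  set A : ℝ := S / ρ ^ 2 with hA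
  set C : ℝ := n * A + (N + 1) / 2 with hC
  have hA0 : 0 ≤ A := by positivity
  have hC0 : 0 ≤ C := by positivity
  have hn1 : (1:ℝ) ≤ n := by
    have := i.pos
    exact_mod_cast this
  have hAC : A ≤ C := by nlinarith
  have hB : n * S / ρ + (N + 1) / 2 * ρ = C * ρ := by
    rw [hC, hA]; field_simp
  rw [hB]
  set R : EuclideanSpace ℝ (Fin n) → EuclideanSpace ℝ (Fin n) :=
    fun x => x - (2 * (x i - p i)) • e i with hR
  set ψ : EuclideanSpace ℝ (Fin n) → ℝ :=
    fun x => A * ‖x - p‖ ^ 2 + C * ρ * (x i - p i) - C * (x i - p i) ^ 2 with hψ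
  set g : EuclideanSpace ℝ (Fin n) → ℝ := fun x => (w x - w (R x)) / 2 - ψ x with hg
  set D : Set (EuclideanSpace ℝ (Fin n)) := {x | x ∈ closedBall p ρ ∧ p i ≤ x i} with hD
  have hRn : ∀ x, ‖R x - p‖ = ‖x - p‖ := by
    intro x
    have : ‖R x - p‖ ^ 2 = ‖x - p‖ ^ 2 := by
      rw [EuclideanSpace.norm_sq_eq, EuclideanSpace.norm_sq_eq]
      refine Finset.sum_congr rfl fun j _ => ?_
      by_cases hj : j = i
      · subst hj
        simp [hR, he]
        ring
      · simp [hR, he, hj]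
    exact (pow_left_inj₀ (norm_nonneg _) (norm_nonneg _) (by norm_num)).1 this
  have hRm : ∀ x ∈ closedBall p ρ, R x ∈ closedBall p ρ := by
    intro x hx
    rw [mem_closedBall_iff_norm] at hx ⊢
    rw [hRn]; exact hx
  have hRc : Continuous R := by simp only [hR]; fun_prop
  have hti : ∀ x : EuclideanSpace ℝ (Fin n), |x i - p i| ≤ ‖x - p‖ := by
    intro x
    simpa using PiLp.norm_apply_le (x - p) i
  have hgc : ContinuousOn g D := by
    have h1 : ContinuousOn w (closedBall p ρ) := hw.continuousOn.mono hpW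
    have h2 : ContinuousOn (fun x => w (R x)) (closedBall p ρ) :=
      h1.comp hRc.continuousOn hRm
    have h3 : Continuous ψ := by simp only [hψ]; fun_prop
    have h4 : ContinuousOn g (closedBall p ρ) := ((h1.sub h2).div_const 2).sub h3.continuousOn
    exact h4.mono fun x hx => hx.1
  have hDc : IsCompact D := by
    apply (isCompact_closedBall p ρ).inter_right
    exact isClosed_le (f := fun _ : EuclideanSpace ℝ (Fin n) => p i)
      (g := fun x : EuclideanSpace ℝ (Fin n) => x i) continuous_const (by fun_prop)
  have hDn : D.Nonempty := ⟨p, mem_closedBall_self hρ.le, le_rfl⟩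
  obtain ⟨q, hq, hqm⟩ := hDc.exists_isMaxOn hDn hgc
  have hψ0 : ∀ x ∈ D, A * ‖x - p‖ ^ 2 ≤ ψ x := by
    intro x hx
    have h1 : x i - p i ≤ ρ :=
      (le_abs_self _).trans ((hti x).trans (mem_closedBall_iff_norm.1 hx.1))
    have h2 : 0 ≤ x i - p i := sub_nonneg.2 hx.2
    simp only [hψ]
    nlinarith [mul_nonneg hC0 (mul_nonneg h2 (sub_nonneg.2 h1))]
  have hgq : g q ≤ 0 := by
    have hψq := hψ0 q hq
    rcases hq.2.eq_or_lt with h0 | h0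
    · have : R q = q := by simp [hR, h0]
      simp only [hg, this]
      have : 0 ≤ A * ‖q - p‖ ^ 2 := by positivity
      linarith
    rcases (mem_closedBall_iff_norm.1 hq.1).eq_or_lt with h1 | h1
    · have e1 : A * ‖q - p‖ ^ 2 = S := by rw [h1, hA]; field_simp
      have a1 := abs_le.1 (hS q hq.1)
      have a2 := abs_le.1 (hS _ (hRm q hq.1))
      simp only [hg]
      linarith
    exfalso
    have hqi : D ∈ 𝓝 q := by
      have o1 : IsOpen {x : EuclideanSpace ℝ (Fin n) | x ∈ ball p ρ ∧ p i < x i} :=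
        isOpen_ball.inter (isOpen_lt (f := fun _ : EuclideanSpace ℝ (Fin n) => p i)
          (g := fun x : EuclideanSpace ℝ (Fin n) => x i) continuous_const (by fun_prop))
      refine mem_of_superset (o1.mem_nhds ⟨mem_ball_iff_norm.2 h1, h0⟩) ?_
      exact fun x hx => ⟨ball_subset_closedBall hx.1, hx.2.le⟩
    have hlm : IsLocalMax g q := hqm.isLocalMax hqi
    have key : ∀ j, (fderiv ℝ (fun y => fderiv ℝ w y (e j)) q (e j)
        - fderiv ℝ (fun y => fderiv ℝ w y (e j)) (R q) (e j)) / 2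
        - (2 * A - 2 * C * (if j = i then 1 else 0)) ≤ 0 := by
      intro j
      set a : ℝ := if j = i then 1 else 0 with ha
      have haa : a * a = a := by rw [ha]; split_ifs <;> simp
      set σ : ℝ := 1 - 2 * a with hσ
      have hσσ : σ * σ = 1 := by rw [hσ]; linear_combination 4 * haa
      obtain ⟨u1, u2⟩ := line_derivs hW hw (hpW hq.1) (e j)
      obtain ⟨v1, v2⟩ := line_derivs hW hw (hpW (hRm q hq.1)) (σ • e j)
      have hRl : ∀ s : ℝ, R (q + s • e j) = R q + s • (σ • e j) := by
        intro s
        have : (e j) i = a := by simp [he, ha, eq_comm]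
        simp only [hR, hσ, PiLp.add_apply, PiLp.smul_apply, this, smul_eq_mul]
        by_cases hj : j = i
        · subst hj
          module
        · have : a = 0 := by simp [ha, hj]
          rw [this]; module
      have hψl : ∀ s : ℝ, ψ (q + s • e j) = A * (‖q - p‖ ^ 2 + 2 * s * (q j - p j) + s ^ 2)
          + C * ρ * (q i - p i + s * a) - C * (q i - p i + s * a) ^ 2 := by
        intro s
        have h1 : (e j) i = a := by simp [he, ha, eq_comm]
        have h2 : ‖q + s • e j - p‖ ^ 2 = ‖q - p‖ ^ 2 + 2 * s * (q j - p j) + s ^ 2 := by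
          have : q + s • e j - p = (q - p) + s • e j := by abel
          rw [this, norm_add_sq_real, inner_smul_right, norm_smul]
          have h3 : ⟪q - p, e j⟫ = q j - p j := by
            simp [he, EuclideanSpace.inner_single_right]
          have h4 : ‖e j‖ = 1 := by simp [he]
          rw [h3, h4, mul_one, Real.norm_eq_abs, sq_abs]
          ring
        simp only [hψ, h2, PiLp.add_apply, PiLp.smul_apply, h1, smul_eq_mul]
        ring
      have p1 : ∀ s : ℝ, HasDerivAt (fun s : ℝ => ψ (q + s • e j))
          (A * (2 * (q j - p j) + 2 * s) + C * ρ * a - 2 * C * (q i - p i + s * a) * a) s := by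
        intro s
        have hfun : (fun s : ℝ => ψ (q + s • e j)) = fun s =>
          A * (‖q - p‖ ^ 2 + 2 * s * (q j - p j) + s ^ 2)
          + C * ρ * (q i - p i + s * a) - C * (q i - p i + s * a) ^ 2 := funext hψl
        rw [hfun]
        have d0 := hasDerivAt_id' s
        have d1 : HasDerivAt (fun s : ℝ => q i - p i + s * a) a s := by
          simpa using (d0.mul_const a).const_add (q i - p i)
        have d2 := (((d0.const_mul 2).mul_const (q j - p j)).const_add (‖q - p‖ ^ 2)).add (d0.pow 2)
        have d3 := ((d2.const_mul A).add (d1.const_mul (C * ρ))).sub ((d1.pow 2).const_mul C)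
        refine d3.congr_deriv ?_
        norm_num
        ring
      have p2 : HasDerivAt (fun s : ℝ =>
          A * (2 * (q j - p j) + 2 * s) + C * ρ * a - 2 * C * (q i - p i + s * a) * a)
          (2 * A - 2 * C * a) 0 := by
        have d0 := hasDerivAt_id' (0:ℝ)
        have d1 : HasDerivAt (fun s : ℝ => q i - p i + s * a) a 0 := by
          simpa using (d0.mul_const a).const_add (q i - p i)
        have d2 := ((((d0.const_mul 2).const_add (2 * (q j - p j))).const_mul A).add_const
          (C * ρ * a)).sub ((d1.const_mul (2 * C)).mul_const a)
        refine d2.congr_deriv ?_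
        linear_combination (-2 * C) * haa
      have hh1 : ∀ᶠ s in 𝓝 (0:ℝ), HasDerivAt (fun s : ℝ => g (q + s • e j))
          ((fderiv ℝ w (q + s • e j) (e j)
            - fderiv ℝ w (R q + s • (σ • e j)) (σ • e j)) / 2
            - (A * (2 * (q j - p j) + 2 * s) + C * ρ * a - 2 * C * (q i - p i + s * a) * a)) s := by
        filter_upwards [u1, v1] with s hu hv
        have := ((hu.sub hv).div_const 2).sub (p1 s)
        have hfun : (fun s : ℝ => g (q + s • e j)) = fun s =>
          (w (q + s • e j) - w (R q + s • (σ • e j))) / 2 - ψ (q + s • e j) := by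
          funext s
          simp only [hg, hRl]
        rw [hfun]
        exact this
      have hh2 := ((u2.sub v2).div_const 2).sub p2
      have hlm' : IsLocalMax (fun s : ℝ => g (q + s • e j)) 0 := by
        have hcont : ContinuousAt (fun s : ℝ => q + s • e j) 0 := by fun_prop
        have : ∀ᶠ s in 𝓝 (0:ℝ), g (q + s • e j) ≤ g q := by
          have h5 : ∀ᶠ y in 𝓝 (q + (0:ℝ) • e j), g y ≤ g q := by
            rw [zero_smul, add_zero]; exact hlm
          exact hcont.eventually h5
        simpa [IsLocalMax, IsMaxFilter] using this
      have := second_deriv_nonpos hh1 hh2 hlm'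
      have es : fderiv ℝ (fun y => fderiv ℝ w y (σ • e j)) (R q) (σ • e j)
          = fderiv ℝ (fun y => fderiv ℝ w y (e j)) (R q) (e j) := by
        have : (fun y => fderiv ℝ w y (σ • e j)) = σ • (fun y => fderiv ℝ w y (e j)) := by
          funext y; simp
        rw [this, fderiv_const_smul_field]
        simp only [Pi.smul_apply, smul_apply, map_smul, smul_eq_mul]
        rw [← mul_assoc, hσσ, one_mul]
      rw [es] at this
      exact this
    have hsum := Finset.sum_nonpos (s := Finset.univ) fun j _ => key j
    have e1 : ∑ j, ((fderiv ℝ (fun y => fderiv ℝ w y (e j)) q (e j)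
        - fderiv ℝ (fun y => fderiv ℝ w y (e j)) (R q) (e j)) / 2
        - (2 * A - 2 * C * (if j = i then 1 else 0)))
        = (lap w q - lap w (R q)) / 2 - (n * (2 * A) - 2 * C) := by
      rw [Finset.sum_sub_distrib, ← Finset.sum_div, Finset.sum_sub_distrib,
        Finset.sum_sub_distrib]
      simp [lap, he]
    rw [e1] at hsum
    have a1 := abs_le.1 (hL q hq.1)
    have a2 := abs_le.1 (hL _ (hRm q hq.1))
    rw [hC] at hsum
    linarith
  -- the derivative at `p`
  have hline : ∀ s ∈ Icc (0:ℝ) ρ, (w (p + s • e i) - w (p + s • (-e i))) / 2 - C * ρ * s ≤ 0 := by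
    intro s hs
    have hei : ‖e i‖ = 1 := by simp [he]
    have hei' : (e i) i = 1 := by simp [he]
    have hm : p + s • e i ∈ D := by
      constructor
      · rw [mem_closedBall_iff_norm]
        simp only [add_sub_cancel_left, norm_smul, hei, Real.norm_eq_abs, abs_of_nonneg hs.1]
        linarith [hs.2]
      · simp [hei', hs.1]
    have h1 := (hqm hm).trans hgq
    have h2 : R (p + s • e i) = p + s • (-e i) := by
      simp only [hR, PiLp.add_apply, PiLp.smul_apply, hei', smul_eq_mul]
      module
    have h3 : ψ (p + s • e i) = A * s ^ 2 + C * ρ * s - C * s ^ 2 := by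
      simp only [hψ, PiLp.add_apply, PiLp.smul_apply, hei', smul_eq_mul, add_sub_cancel_left,
        norm_smul, hei, Real.norm_eq_abs, mul_one, sq_abs]
    simp only [hg, h2, h3] at h1
    nlinarith [mul_nonneg (sub_nonneg.2 hAC) (sq_nonneg s)]
  have hpW' : p ∈ W := hpW (mem_closedBall_self hρ.le)
  have d1 := (line_derivs hW hw hpW' (e i)).1.self_of_nhds
  have d2 := (line_derivs hW hw hpW' (-e i)).1.self_of_nhds
  have d3 := ((d1.sub d2).div_const 2).sub ((hasDerivAt_id' (0:ℝ)).const_mul (C * ρ))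
  by_contra hcon
  push Not at hcon
  set k : ℝ → ℝ := fun s => (w (p + s • e i) - w (p + s • (-e i))) / 2 - C * ρ * s with hk
  have d4 : HasDerivAt k (fderiv ℝ w p (e i) - C * ρ) 0 := by
    refine d3.congr_deriv ?_
    simp
  have hmx : IsLocalMaxOn k (Icc 0 ρ) 0 := by
    have : k 0 = 0 := by simp [hk]
    refine Filter.eventually_of_mem self_mem_nhdsWithin fun s hs => ?_
    show k s ≤ k 0
    rw [this]; exact hline s hs
  have hcone : (ρ:ℝ) ∈ posTangentConeAt (Icc 0 ρ) 0 :=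
    mem_posTangentConeAt_of_segment_subset (s := Icc (0:ℝ) ρ) (x := 0) (y := ρ)
      (by rw [zero_add, segment_eq_Icc hρ.le])
  have h6 := hmx.hasFDerivWithinAt_nonpos d4.hasFDerivAt.hasFDerivWithinAt hcone
  simp at h6
  nlinarith [mul_pos hρ (sub_pos.2 hcon)]

lemma lap_neg' (w : EuclideanSpace ℝ (Fin n) → ℝ) (x : EuclideanSpace ℝ (Fin n)) :
    lap (fun y => - w y) x = - lap w x := by
  simp only [lap, ← Finset.sum_neg_distrib]
  refine Finset.sum_congr rfl fun j _ => ?_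
  have : (fun y => fderiv ℝ (fun y => - w y) y (EuclideanSpace.single j 1))
      = fun y => - fderiv ℝ w y (EuclideanSpace.single j 1) := by
    funext y; rw [fderiv_fun_neg]; simp
  rw [this, fderiv_fun_neg]; simp

/-- Interior gradient estimate. -/
lemma grad_est {w : EuclideanSpace ℝ (Fin n) → ℝ} {W : Set (EuclideanSpace ℝ (Fin n))}
    (hW : IsOpen W) (hw : ContDiffOn ℝ 2 w W) {p : EuclideanSpace ℝ (Fin n)} {ρ S N : ℝ}
    (hρ : 0 < ρ) (hN : 0 ≤ N) (hpW : closedBall p ρ ⊆ W)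
    (hS : ∀ x ∈ closedBall p ρ, |w x| ≤ S) (hL : ∀ x ∈ closedBall p ρ, |lap w x| ≤ N) :
    ‖gradient w p‖ ≤ n * (n * S / ρ + (N + 1) / 2 * ρ) := by
  have hS0 : 0 ≤ S := (abs_nonneg _).trans (hS p (mem_closedBall_self hρ.le))
  set B := n * S / ρ + (N + 1) / 2 * ρ with hB
  have hB0 : 0 ≤ B := by positivity
  have hi : ∀ i, ‖(gradient w p) i‖ ≤ B := by
    intro i
    have e1 : (gradient w p) i = fderiv ℝ w p (EuclideanSpace.single i 1) := by
      have h1 := InnerProductSpace.toDual_symm_apply (𝕜 := ℝ)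
        (x := (EuclideanSpace.single i 1 : EuclideanSpace ℝ (Fin n))) (y := fderiv ℝ w p)
      rw [← h1, EuclideanSpace.inner_single_right]
      simp [gradient]
    rw [e1, Real.norm_eq_abs, abs_le]
    constructor
    · have := partial_le hW hw.neg hρ hN hpW (by simpa using hS)
        (by intro x hx; rw [lap_neg', abs_neg]; exact hL x hx) i
      rw [fderiv_fun_neg] at this
      simp only [neg_apply] at this
      linarith
    · exact partial_le hW hw hρ hN hpW hS hL i
  rcases Nat.eq_zero_or_pos n with h0 | h0
  · subst h0
    rw [Subsingleton.elim (gradient w p) 0]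
    simp
  have hn1 : (1:ℝ) ≤ n := by exact_mod_cast h0
  have h2 : ‖gradient w p‖ ^ 2 ≤ (n * B) ^ 2 := by
    rw [EuclideanSpace.norm_sq_eq]
    calc ∑ i, ‖(gradient w p) i‖ ^ 2 ≤ ∑ i : Fin n, B ^ 2 :=
          Finset.sum_le_sum fun i _ => pow_le_pow_left₀ (norm_nonneg _) (hi i) 2
      _ = n * B ^ 2 := by simp
      _ ≤ (n * B) ^ 2 := by rw [mul_pow]; nlinarith [sq_nonneg B, mul_nonneg (sq_nonneg B) (sub_nonneg.2 hn1)]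
  exact (pow_le_pow_iff_left₀ (norm_nonneg _) (by positivity) (by norm_num)).1 h2

/-- Subtracting an affine function. -/
lemma sub_affine {u : EuclideanSpace ℝ (Fin n) → ℝ} {W : Set (EuclideanSpace ℝ (Fin n))}
    (hW : IsOpen W) (hu : ContDiffOn ℝ 2 u W) (x₀ v : EuclideanSpace ℝ (Fin n)) :
    ContDiffOn ℝ 2 (fun x => u x - ⟪x - x₀, v⟫) W ∧
    (∀ x ∈ W, gradient (fun x => u x - ⟪x - x₀, v⟫) x = gradient u x - v) ∧
    (∀ x ∈ W, lap (fun x => u x - ⟪x - x₀, v⟫) x = lap u x) := by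
  have hl : ∀ x, HasFDerivAt (fun x : EuclideanSpace ℝ (Fin n) => ⟪x - x₀, v⟫)
      (InnerProductSpace.toDual ℝ (EuclideanSpace ℝ (Fin n)) v) x := by
    intro x
    have h1 := ((InnerProductSpace.toDual ℝ (EuclideanSpace ℝ (Fin n)) v).hasFDerivAt
      (x := x)).sub_const ⟪x₀, v⟫
    have h2 : (fun x : EuclideanSpace ℝ (Fin n) => ⟪x - x₀, v⟫) = fun x =>
        InnerProductSpace.toDual ℝ (EuclideanSpace ℝ (Fin n)) v x - ⟪x₀, v⟫ := by
      funext y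
      rw [inner_sub_left, InnerProductSpace.toDual_apply_apply, real_inner_comm]
    rw [h2]
    exact h1
  have hd : ∀ x ∈ W, fderiv ℝ (fun x => u x - ⟪x - x₀, v⟫) x
      = fderiv ℝ u x - InnerProductSpace.toDual ℝ (EuclideanSpace ℝ (Fin n)) v := by
    intro x hx
    have : DifferentiableAt ℝ u x :=
      (hu.contDiffAt (hW.mem_nhds hx)).differentiableAt (by norm_num)
    exact (this.hasFDerivAt.sub (hl x)).fderiv
  refine ⟨?_, ?_, ?_⟩
  · refine hu.sub (ContDiff.contDiffOn ?_)
    exact (contDiff_id.sub contDiff_const).inner ℝ contDiff_const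
  · intro x hx
    simp [gradient, hd x hx]
  · intro x hx
    simp only [lap]
    refine Finset.sum_congr rfl fun j _ => ?_
    have : (fun y => fderiv ℝ (fun x => u x - ⟪x - x₀, v⟫) y (EuclideanSpace.single j 1))
        =ᶠ[𝓝 x] fun y => fderiv ℝ u y (EuclideanSpace.single j 1)
          - InnerProductSpace.toDual ℝ (EuclideanSpace ℝ (Fin n)) v (EuclideanSpace.single j 1) := by
      filter_upwards [hW.mem_nhds hx] with y hy
      rw [hd y hy]; rfl
    rw [this.fderiv_eq, fderiv_sub_const]

/-- Hausdorff measure of a set which is a flat Lipschitz graph in direction `ν`. -/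
lemma hausdorff_graph (hn : 2 ≤ n) {s : Set (EuclideanSpace ℝ (Fin n))}
    {x₀ ν : EuclideanSpace ℝ (Fin n)} {ρ : ℝ} (hρ : 0 < ρ) (hν : ‖ν‖ = 1)
    (hs : s ⊆ ball x₀ ρ)
    (hL : ∀ x ∈ s, ∀ y ∈ s, |⟪x - y, ν⟫| ≤ 1 / 2 * ‖x - y‖) :
    μH[(n-1:ℝ)] s ≤ ENNReal.ofReal ((2 * n) ^ (n - 1) * (2 * ρ) ^ (n - 1)) := by
  obtain ⟨m, rfl⟩ : ∃ m, n = m + 1 := ⟨n - 1, by omega⟩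
  have hcard : Module.finrank ℝ (EuclideanSpace ℝ (Fin (m+1))) = Fintype.card (Fin (m+1)) := by
    simp
  obtain ⟨b, hb⟩ := Orthonormal.exists_orthonormalBasis_extension_of_card_eq (𝕜 := ℝ) hcard
    (v := fun _ => ν) (s := {0}) (by
      constructor
      · intro i; simpa using hν
      · intro i j hij
        exact absurd (Subsingleton.elim i j) hij)
  have hb0 : b 0 = ν := hb 0 rfl
  set P : EuclideanSpace ℝ (Fin (m+1)) → (Fin m → ℝ) := fun x i => ⟪b i.succ, x - x₀⟫ with hP
  have key : ∀ x ∈ s, ∀ y ∈ s, ‖x - y‖ ≤ 2 * (m + 1) * ‖P x - P y‖ := by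
    intro x hx y hy
    have h1 := b.sum_sq_norm_inner_right (x - y)
    rw [Fin.sum_univ_succ, hb0] at h1
    have h2 : ‖⟪ν, x - y⟫‖ ^ 2 ≤ (1 / 2 * ‖x - y‖) ^ 2 := by
      rw [real_inner_comm, Real.norm_eq_abs]
      exact pow_le_pow_left₀ (abs_nonneg _) (hL x hx y hy) 2
    have h3 : ∑ i : Fin m, ‖⟪b i.succ, x - y⟫‖ ^ 2 ≤ m * ‖P x - P y‖ ^ 2 := by
      calc ∑ i : Fin m, ‖⟪b i.succ, x - y⟫‖ ^ 2 ≤ ∑ i : Fin m, ‖P x - P y‖ ^ 2 := by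
            refine Finset.sum_le_sum fun i _ => pow_le_pow_left₀ (norm_nonneg _) ?_ 2
            have := norm_le_pi_norm (P x - P y) i
            refine le_trans (le_of_eq ?_) this
            simp only [hP, Pi.sub_apply, ← inner_sub_right]
            congr 2
            abel
        _ = m * ‖P x - P y‖ ^ 2 := by simp
    have h4 : ‖x - y‖ ^ 2 ≤ (2 * (m + 1) * ‖P x - P y‖) ^ 2 := by
      have : (0:ℝ) ≤ m := by positivity
      have h5 : 0 ≤ ‖P x - P y‖ ^ 2 := by positivity
      nlinarith [mul_nonneg this h5, mul_nonneg (mul_nonneg this this) h5]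
    exact (pow_le_pow_iff_left₀ (norm_nonneg _) (by positivity) (by norm_num)).1 h4
  have hinj : InjOn P s := by
    intro x hx y hy hxy
    have := key x hx y hy
    rw [hxy] at this
    simp only [sub_self, norm_zero, mul_zero, norm_le_zero_iff] at this
    exact sub_eq_zero.1 this
  set K : ℝ≥0 := 2 * (m + 1) with hK
  have hG : LipschitzOnWith K (Function.invFunOn P s) (P '' s) := by
    refine LipschitzOnWith.of_dist_le_mul ?_
    rintro _ ⟨x, hx, rfl⟩ _ ⟨y, hy, rfl⟩
    rw [hinj.leftInvOn_invFunOn hx, hinj.leftInvOn_invFunOn hy, dist_eq_norm, dist_eq_norm]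
    simpa [hK] using key x hx y hy
  have himg : Function.invFunOn P s '' (P '' s) = s := hinj.invFunOn_image subset_rfl
  have hsub : P '' s ⊆ Icc (fun _ => -ρ) (fun _ => ρ) := by
    rintro _ ⟨x, hx, rfl⟩
    have h1 : ∀ i, |P x i| ≤ ρ := by
      intro i
      have h2 := abs_real_inner_le_norm (b i.succ) (x - x₀)
      have h3 := mem_ball_iff_norm.1 (hs hx)
      rw [b.norm_eq_one, one_mul] at h2
      exact h2.trans h3.le
    exact ⟨fun i => (abs_le.1 (h1 i)).1, fun i => (abs_le.1 (h1 i)).2⟩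
  have hdim : (((m + 1 : ℕ) : ℝ) - 1) = (m : ℝ) := by push_cast; ring
  rw [hdim]
  have h1 := hG.hausdorffMeasure_image_le (d := (m:ℝ)) (by positivity)
  rw [himg] at h1
  have h2 : μH[(m:ℝ)] (P '' s) ≤ ENNReal.ofReal ((2 * ρ) ^ m) := by
    have h3 : (μH[(m:ℝ)] : Measure (Fin m → ℝ)) = volume := by
      have := hausdorffMeasure_pi_real (ι := Fin m)
      rwa [Fintype.card_fin] at this
    rw [h3]
    refine (measure_mono hsub).trans ?_
    rw [Real.volume_Icc_pi, ENNReal.ofReal_pow (by positivity)]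
    simp [← two_mul]
  refine h1.trans ((mul_le_mul_right h2 _).trans (le_of_eq ?_))
  rw [ENNReal.ofReal_mul (by positivity)]
  simp only [Nat.add_sub_cancel]
  congr 1
  rw [ENNReal.rpow_natCast, ENNReal.ofReal_pow (by positivity)]
  congr 1
  rw [ENNReal.ofReal, hK]
  congr 1
  ext
  push_cast
  rw [Real.coe_toNNReal _ (by positivity)]

/-- **Lemma 3.3.** If `u` is `δr`-close to the half-plane solution `Q₀((x-x₀)·ν)₊` in
`B_{r/κ}(x₀)`, then on the level set `{u = r} ∩ B_{r/(2κ)}(x₀)` the gradient of `u` is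
`C₁Q₀(δ+κ)`-close to `Q₀ν`, and this level set has `(n-1)`-dimensional measure at most
`C₂(r/κ)^{n-1}`; the constants depend only on `n`, `‖f‖_∞` and `Q₀`. -/
theorem flat_level_set_gradient_estimate
    (hn : 2 ≤ n) (M Q₀ : ℝ) (hM : 0 ≤ M) (hQ₀ : 0 < Q₀) :
    ∃ δ₀ κ₀ C₁ C₂ : ℝ, 0 < δ₀ ∧ 0 < κ₀ ∧ 0 < C₁ ∧ 0 < C₂ ∧
      ∀ (f u : EuclideanSpace ℝ (Fin n) → ℝ),
        ContDiffOn ℝ (⊤ : ℕ∞) f (ball 0 1) →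
        (∀ x ∈ ball (0 : EuclideanSpace ℝ (Fin n)) 1, |f x| ≤ M) →
        ContinuousOn u (ball 0 1) →
        (∀ x ∈ ball (0 : EuclideanSpace ℝ (Fin n)) 1, 0 ≤ u x) →
        ContDiffOn ℝ 2 u (posSet u) →
        (∀ x ∈ posSet u, lap u x = - f x) →
        ∀ (δ κ r : ℝ) (x₀ ν : EuclideanSpace ℝ (Fin n)),
          0 < δ → δ ≤ δ₀ → 0 < κ → κ ≤ κ₀ → 0 < r → ‖ν‖ = 1 →
          ball x₀ (r/κ) ⊆ ball (0 : EuclideanSpace ℝ (Fin n)) 1 →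
          (∀ x ∈ ball x₀ (r/κ), |u x - Q₀ * max ⟪x - x₀, ν⟫ 0| ≤ δ * r) →
          (∀ x ∈ ball x₀ (r/(2*κ)), u x = r →
            ‖gradient u x - Q₀ • ν‖ ≤ C₁ * Q₀ * (δ + κ)) ∧
          μH[(n-1:ℝ)] {x | x ∈ ball x₀ (r/(2*κ)) ∧ u x = r}
            ≤ ENNReal.ofReal (C₂ * (r/κ)^(n-1)) := by
  set c : ℝ := 1 / (4 * Q₀) with hc
  have hc0 : 0 < c := by positivity
  have hn0 : (0:ℝ) < n := by exact_mod_cast (by omega : 0 < n)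
  set E₁ : ℝ := n * (n / c + (M + 1) / 2 * c) with hE
  have hE0 : 0 < E₁ := by positivity
  set ε : ℝ := Q₀ / (4 * E₁) with hε
  have hε0 : 0 < ε := by positivity
  refine ⟨min (1/8) ε, min (2 * Q₀) ε, E₁ / Q₀, (2 * n) ^ (n - 1), by positivity, by positivity,
    by positivity, by positivity, ?_⟩
  intro f u _ hfM huc hu0 hu2 hlap δ κ r x₀ ν hδ hδ' hκ hκ' hr hν hball hflat
  have hδ8 : δ ≤ 1/8 := hδ'.trans (min_le_left _ _)
  have hδε : δ ≤ ε := hδ'.trans (min_le_right _ _)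
  have hκQ : κ ≤ 2 * Q₀ := hκ'.trans (min_le_left _ _)
  have hκε : κ ≤ ε := hκ'.trans (min_le_right _ _)
  have hrκ : 0 < r / κ := by positivity
  have hhalf : r / (2 * κ) = r / κ / 2 := by field_simp
  have hW : IsOpen (posSet u) := by
    have : posSet u = ball 0 1 ∩ u ⁻¹' (Ioi 0) := rfl
    rw [this]
    exact huc.isOpen_inter_preimage isOpen_ball isOpen_Ioi
  have hr1 : r ≤ κ := by
    have : Nontrivial (EuclideanSpace ℝ (Fin n)) := by
      have : Nonempty (Fin n) := ⟨⟨0, by omega⟩⟩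
      infer_instance
    have h1 := diam_mono hball isBounded_ball
    rw [diam_ball_eq _ hrκ.le, diam_ball_eq _ zero_le_one] at h1
    have h2 : r / κ ≤ 1 := by linarith
    rwa [div_le_one hκ] at h2
  have hcr : c * r ≤ r / κ / 2 := by
    have : c ≤ 1 / κ / 2 := by
      rw [hc, div_div]
      exact one_div_le_one_div_of_le (by positivity) (by linarith)
    calc c * r ≤ (1 / κ / 2) * r := mul_le_mul_of_nonneg_right this hr.le
      _ = _ := by ring
  have hQc : Q₀ * c = 1 / 4 := by rw [hc]; field_simp
  -- pointwise gradient estimate in the region where the half plane solution is large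
  have main : ∀ z ∈ ball x₀ (r/(2*κ)), r / 2 ≤ Q₀ * ⟪z - x₀, ν⟫ →
      z ∈ posSet u ∧ ‖gradient u z - Q₀ • ν‖ ≤ E₁ * (δ + κ) := by
    intro z hz hzt
    have hin : ∀ y ∈ closedBall z (c * r), y ∈ ball x₀ (r / κ) ∧ r / 4 ≤ Q₀ * ⟪y - x₀, ν⟫ := by
      intro y hy
      constructor
      · rw [mem_ball] at hz ⊢
        rw [mem_closedBall] at hy
        have := dist_triangle y z x₀
        rw [hhalf] at hz
        linarith
      · rw [mem_closedBall_iff_norm] at hy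
        have h1 : |⟪y - z, ν⟫| ≤ c * r := by
          have := abs_real_inner_le_norm (y - z) ν
          rw [hν, mul_one] at this
          exact this.trans hy
        have h2 : ⟪y - x₀, ν⟫ = ⟪y - z, ν⟫ + ⟪z - x₀, ν⟫ := by
          rw [← inner_add_left]; congr 1; abel
        rw [h2]
        have h3 := mul_le_mul_of_nonneg_left (abs_le.1 h1).1 hQ₀.le
        have h4 : Q₀ * -(c * r) = - (r / 4) := by linear_combination (-r) * hQc
        rw [h4] at h3
        linarith
    have hw : ∀ y ∈ closedBall z (c * r), |u y - ⟪y - x₀, Q₀ • ν⟫| ≤ δ * r := by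
      intro y hy
      obtain ⟨h1, h2⟩ := hin y hy
      have h3 := hflat y h1
      have h4 : 0 ≤ ⟪y - x₀, ν⟫ := by
        by_contra h; push Not at h
        nlinarith [mul_neg_of_pos_of_neg hQ₀ h]
      rw [max_eq_left h4] at h3
      rwa [inner_smul_right]
    have hpos : closedBall z (c * r) ⊆ posSet u := by
      intro y hy
      obtain ⟨h1, h2⟩ := hin y hy
      have h3 := abs_le.1 (hw y hy)
      rw [inner_smul_right] at h3
      refine ⟨hball h1, ?_⟩
      have h5 : δ * r ≤ 1/8 * r := mul_le_mul_of_nonneg_right hδ8 hr.le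
      linarith [h3.1]
    have hzm : z ∈ closedBall z (c * r) := mem_closedBall_self (by positivity)
    refine ⟨hpos hzm, ?_⟩
    obtain ⟨a1, a2, a3⟩ := sub_affine hW hu2 x₀ (Q₀ • ν)
    have hest := grad_est hW a1 (ρ := c * r) (by positivity) hM hpos hw (by
      intro y hy
      rw [a3 y (hpos hy), hlap y (hpos hy), abs_neg]
      exact hfM y (hpos hy).1)
    rw [a2 z (hpos hzm)] at hest
    refine hest.trans ?_
    have e1 : n * (δ * r) / (c * r) = n / c * δ := by field_simp
    rw [e1, hE, mul_assoc]
    refine mul_le_mul_of_nonneg_left ?_ hn0.le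
    have h6 : (M + 1) / 2 * (c * r) ≤ (M + 1) / 2 * c * κ := by
      rw [mul_assoc]; gcongr
    have h7 : 0 ≤ n / c * κ := by positivity
    have h8 : 0 ≤ (M + 1) / 2 * c * δ := by positivity
    linarith
  have hlevel : ∀ x ∈ ball x₀ (r/(2*κ)), u x = r → r / 2 ≤ Q₀ * ⟪x - x₀, ν⟫ := by
    intro x hx hxr
    have hx' : x ∈ ball x₀ (r / κ) := ball_subset_ball (by rw [hhalf]; linarith) hx
    have h1 := abs_le.1 (hflat x hx')
    have h5 : δ * r ≤ 1/8 * r := mul_le_mul_of_nonneg_right hδ8 hr.le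
    rw [hxr] at h1
    rcases le_total ⟪x - x₀, ν⟫ 0 with h | h
    · rw [max_eq_right h] at h1
      linarith [h1.2]
    · rw [max_eq_left h] at h1
      linarith [h1.2]
  constructor
  · intro x hx hxr
    have := (main x hx (hlevel x hx hxr)).2
    have e : E₁ / Q₀ * Q₀ = E₁ := by field_simp
    rwa [e]
  · have hsmall : E₁ * (δ + κ) ≤ Q₀ / 2 := by
      have : E₁ * (δ + κ) ≤ E₁ * (ε + ε) := by gcongr
      refine this.trans (le_of_eq ?_)
      rw [hε]; field_simp; norm_num
    set T : Set (EuclideanSpace ℝ (Fin n)) :=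
      ball x₀ (r/(2*κ)) ∩ {z | r / 2 ≤ Q₀ * ⟪z - x₀, ν⟫} with hT
    have hTc : Convex ℝ T := by
      refine (convex_ball _ _).inter ?_
      intro x hx y hy a b ha hb hab
      simp only [mem_setOf_eq] at hx hy ⊢
      have : a • x + b • y - x₀ = a • (x - x₀) + b • (y - x₀) := by
        have : x₀ = (a + b) • x₀ := by rw [hab, one_smul]
        nth_rewrite 1 [this]
        module
      rw [this, inner_add_left, real_inner_smul_left, real_inner_smul_left]
      have h1 := mul_le_mul_of_nonneg_left hx ha
      have h2 := mul_le_mul_of_nonneg_left hy hb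
      have h3 : a * (r / 2) + b * (r / 2) = r / 2 := by rw [← add_mul, hab, one_mul]
      linarith
    have hgr := hausdorff_graph hn (s := {x | x ∈ ball x₀ (r/(2*κ)) ∧ u x = r})
      (ρ := r / (2 * κ)) (by positivity) hν (fun x hx => hx.1) (by
        intro x hx y hy
        have hmv := hTc.norm_image_sub_le_of_norm_fderiv_le' (𝕜 := ℝ) (f := u) (C := Q₀ / 2)
          (φ := InnerProductSpace.toDual ℝ (EuclideanSpace ℝ (Fin n)) (Q₀ • ν))
          (x := y) (y := x)
          (fun z hz => (hu2.contDiffAt (hW.mem_nhds (main z hz.1 hz.2).1)).differentiableAt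
            (by norm_num))
          (fun z hz => by
            have h1 := (main z hz.1 hz.2).2.trans hsmall
            have h2 : fderiv ℝ u z - InnerProductSpace.toDual ℝ (EuclideanSpace ℝ (Fin n)) (Q₀ • ν)
              = InnerProductSpace.toDual ℝ (EuclideanSpace ℝ (Fin n))
                (gradient u z - Q₀ • ν) := by simp [gradient]
            rw [h2, LinearIsometryEquiv.norm_map]
            exact h1)
          ⟨hy.1, hlevel y hy.1 hy.2⟩ ⟨hx.1, hlevel x hx.1 hx.2⟩
        rw [hx.2, hy.2, sub_self, zero_sub, norm_neg, InnerProductSpace.toDual_apply_apply,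
          real_inner_smul_left, real_inner_comm, norm_mul, Real.norm_eq_abs, Real.norm_eq_abs,
          abs_of_pos hQ₀] at hmv
        have h9 : Q₀ * |⟪x - y, ν⟫| ≤ Q₀ * (1 / 2 * ‖x - y‖) := by linarith
        exact le_of_mul_le_mul_left h9 hQ₀)
    refine hgr.trans (le_of_eq ?_)
    have : 2 * (r / (2 * κ)) = r / κ := by rw [hhalf]; ring
    rw [this]
end
end
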